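/- arXiv:2309.07905 — 4 statements merged into one kernel-verified Lean document; each statement's English description precedes it below -/
import Mathlib

section
/- Let G be a simple graph, let X, Y ⊆ V(G), and let k be a natural number. Then either (1) G contains k pairwise non-adjacent X-Y-paths, or (2) there exists a set of fewer than 2^{χ'_s(G)}·k vertices of G that separates X and Y, where χ'_s(G) denotes the strong chromatic index of G. -/
open SimpleGraph

universe u

variable {V : Type u}

/-- A packaged walk in `G`: a pair of endpoints together with a walk between them. -/
abbrev PathPkg (G : SimpleGraph V) : Type u := Σ x : V, Σ y : V, G.Walk x y

/-- The set of vertices of a packaged walk. -/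
def pkgSupport {G : SimpleGraph V} (p : PathPkg G) : Set V := {x | x ∈ p.2.2.support}

/-- The set of edges of a packaged walk. -/
def pkgEdges {G : SimpleGraph V} (p : PathPkg G) : Set (Sym2 V) := {e | e ∈ p.2.2.edges}

/-- `p` is an `X`-`Y`-path: a path whose first endpoint lies in `X` and whose
second endpoint lies in `Y`. -/
def IsXYPath (G : SimpleGraph V) (X Y : Set V) (p : PathPkg G) : Prop :=
  p.2.2.IsPath ∧ p.1 ∈ X ∧ p.2.1 ∈ Y

/-- Two packaged walks are (vertex-)disjoint. -/
def PkgDisjoint {G : SimpleGraph V} (p q : PathPkg G) : Prop :=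
  ∀ x, x ∈ pkgSupport p → x ∉ pkgSupport q

/-- Two packaged walks are non-adjacent: they are vertex-disjoint and no edge of `G`
joins a vertex of one to a vertex of the other. -/
def PkgNonAdj (G : SimpleGraph V) (p q : PathPkg G) : Prop :=
  ∀ a, a ∈ pkgSupport p → ∀ b, b ∈ pkgSupport q → a ≠ b ∧ ¬ G.Adj a b

/-- `Z` separates `X` and `Y` in `G`: every `X`-`Y`-path meets `Z`. -/
def XYSeparates (G : SimpleGraph V) (X Y Z : Set V) : Prop :=
  ∀ p : PathPkg G, IsXYPath G X Y p → ∃ z, z ∈ Z ∧ z ∈ pkgSupport p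

/-- `M` is an induced matching of `G`: a set of edges of `G` such that any two distinct
edges of `M` are at distance at least `2` in `G` (no endpoint of one equals or is
adjacent to an endpoint of the other). -/
def IsInducedMatching (G : SimpleGraph V) (M : Set (Sym2 V)) : Prop :=
  M ⊆ G.edgeSet ∧
    ∀ e₁, e₁ ∈ M → ∀ e₂, e₂ ∈ M → e₁ ≠ e₂ →
      ∀ a, a ∈ e₁ → ∀ b, b ∈ e₂ → a ≠ b ∧ ¬ G.Adj a b

/-- `G` admits a partition of its edge set into `n` induced matchings
(a strong edge colouring with `n` colours). -/
def HasStrongEdgeColoring (G : SimpleGraph V) (n : ℕ) : Prop :=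
  ∃ M : Fin n → Set (Sym2 V),
    (∀ i, IsInducedMatching G (M i)) ∧
    (Pairwise fun i j => Disjoint (M i) (M j)) ∧
    (⋃ i, M i) = G.edgeSet

/-- The strong chromatic index of `G`: the least number of induced matchings into
which the edge set of `G` can be partitioned. -/
noncomputable def strongChromaticIndex (G : SimpleGraph V) : ℕ :=
  sInf {n | HasStrongEdgeColoring G n}

/-- `G` contains the complete graph `K_r` as a topological minor: there are `r` distinct
branch vertices joined pairwise by internally disjoint paths whose internal vertices
avoid all branch vertices. -/
def HasTopKMinor (G : SimpleGraph V) (r : ℕ) : Prop :=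
  ∃ (f : Fin r → V) (P : (i j : Fin r) → i < j → G.Walk (f i) (f j)),
    Function.Injective f ∧
    (∀ i j hij, (P i j hij).IsPath) ∧
    (∀ i j hij x, x ∈ (P i j hij).support → x ≠ f i → x ≠ f j → ∀ l, x ≠ f l) ∧
    (∀ i j hij i' j' hij', (i, j) ≠ (i', j') →
      ∀ x, x ∈ (P i j hij).support → x ∈ (P i' j' hij').support →
        (x = f i ∨ x = f j) ∧ (x = f i' ∨ x = f j'))

/-- `G` contains the complete graph `K_n` as a minor, witnessed by `n` nonempty,
pairwise disjoint, connected branch sets joined pairwise by edges. -/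
def HasKMinor (G : SimpleGraph V) (n : ℕ) : Prop :=
  ∃ B : Fin n → Set V,
    (∀ i, (B i).Nonempty) ∧
    (∀ i, (G.induce (B i)).Connected) ∧
    (Pairwise fun i j => Disjoint (B i) (B j)) ∧
    (∀ i j, i ≠ j → ∃ a ∈ B i, ∃ b ∈ B j, G.Adj a b)

inductive Reach (G : SimpleGraph V) (X Z : Set V) : V → Prop
  | base (x : V) (hx : x ∈ X) (hz : x ∉ Z) : Reach G X Z x
  | step (u w : V) (h : Reach G X Z u) (ha : G.Adj u w) (hz : w ∉ Z) : Reach G X Z w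

def SepXY (G : SimpleGraph V) (X Y Z : Set V) : Prop := ∀ v, Reach G X Z v → v ∉ Y

def Linked (G : SimpleGraph V) (X Y : Set V) (k : ℕ) : Prop :=
  ∃ P : Fin k → PathPkg G, (∀ i, IsXYPath G X Y (P i)) ∧
    ∀ i j v, v ∈ (P i).2.2.support → v ∈ (P j).2.2.support → i = j

theorem Reach.notMem {G : SimpleGraph V} {X Z : Set V} {v : V} (h : Reach G X Z v) : v ∉ Z := by
  cases h <;> assumption

theorem walk_ind {G : SimpleGraph V} (q : V → Prop) {a b : V} (p : G.Walk a b) (h0 : q a)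
    (hs : ∀ u v, s(u, v) ∈ p.edges → q u → q v) : ∀ v ∈ p.support, q v := by
  induction p with
  | nil => intro v hv; simp at hv; subst hv; exact h0
  | cons h p ih =>
    intro v hv
    rw [Walk.support_cons, List.mem_cons] at hv
    rcases hv with rfl | hv
    · exact h0
    · refine ih (hs _ _ (by simp) h0) ?_ v hv
      intro u v huv hu
      exact hs u v (by rw [Walk.edges_cons]; exact List.mem_cons_of_mem _ huv) hu

theorem reach_of_walk {G : SimpleGraph V} {X Z : Set V} {a b : V} (p : G.Walk a b) (ha : a ∈ X)
    (h : ∀ v ∈ p.support, v ∉ Z) : ∀ v ∈ p.support, Reach G X Z v := by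
  apply walk_ind
  · exact Reach.base _ ha (h _ p.start_mem_support)
  · intro u v huv hu
    exact Reach.step u v hu (p.adj_of_mem_edges huv) (h _ (p.snd_mem_support_of_mem_edges huv))

theorem walk_of_reach {G : SimpleGraph V} {X Z : Set V} {v : V} (h : Reach G X Z v) :
    ∃ a ∈ X, ∃ p : G.Walk a v, ∀ w ∈ p.support, w ∉ Z := by
  induction h with
  | base x hx hz => exact ⟨x, hx, Walk.nil, by simpa using hz⟩
  | step u w h ha hz ih =>
    obtain ⟨a, haX, p, hp⟩ := ih
    refine ⟨a, haX, p.concat ha, ?_⟩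
    intro x hx
    rw [Walk.support_concat, List.mem_append, List.mem_singleton] at hx
    rcases hx with hx | rfl
    · exact hp x hx
    · exact hz

theorem reach_back {G : SimpleGraph V} {X Y Z : Set V} {v : V} (h : Reach G X Z v)
    (h' : Reach G Y Z v) : ∃ x ∈ X, Reach G Y Z x := by
  induction h with
  | base x hx hz => exact ⟨x, hx, h'⟩
  | step u w h ha hz ih => exact ih (Reach.step w u h' ha.symm h.notMem)

theorem SepXY.symm {G : SimpleGraph V} {X Y Z : Set V} (h : SepXY G X Y Z) : SepXY G Y X Z := by
  intro v hv hvX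
  obtain ⟨y, hy, hr⟩ := reach_back hv (Reach.base v hvX hv.notMem)
  exact h y hr hy

theorem reach_switch {G : SimpleGraph V} {X Z S : Set V} {v : V} (h : Reach G X Z v) :
    Reach G X S v ∨ ∃ s ∈ S, Reach G X Z s := by
  induction h with
  | base x hx hz =>
    by_cases hs : x ∈ S
    · exact Or.inr ⟨x, hs, Reach.base x hx hz⟩
    · exact Or.inl (Reach.base x hx hs)
  | step u w h ha hz ih =>
    rcases ih with ih | ih
    · by_cases hs : w ∈ S
      · exact Or.inr ⟨w, hs, Reach.step u w h ha hz⟩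
      · exact Or.inl (Reach.step u w ih ha hs)
    · exact Or.inr ih

theorem linked_of_walks {G : SimpleGraph V} {X Y : Set V} {k : ℕ} (C : Fin k → Set V)
    (h : ∀ i, ∃ a ∈ X, ∃ b ∈ Y, ∃ p : G.Walk a b, ∀ v ∈ p.support, v ∈ C i)
    (hd : ∀ i j v, v ∈ C i → v ∈ C j → i = j) : Linked G X Y k := by
  classical
  choose a ha b hb p hp using h
  refine ⟨fun i => ⟨a i, b i, (p i).bypass⟩, fun i => ⟨(p i).bypass_isPath, ha i, hb i⟩, ?_⟩
  intro i j v hi hj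
  exact hd i j v (hp i v ((p i).support_bypass_subset_support hi)) (hp j v ((p j).support_bypass_subset_support hj))

theorem Linked.mono {G G' : SimpleGraph V} (hG : G ≤ G') {X Y X' Y' : Set V} {k : ℕ}
    (hX : X ⊆ X') (hY : Y ⊆ Y')
    (h : Linked G X Y k) : Linked G' X' Y' k := by
  obtain ⟨P, hP, hd⟩ := h
  refine linked_of_walks (fun i => {v | v ∈ (P i).2.2.support}) (fun i => ?_) hd
  refine ⟨_, hX (hP i).2.1, _, hY (hP i).2.2, (P i).2.2.mapLe hG, ?_⟩
  intro v hv
  simpa using hv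

/-- one side of Goering's argument -/
theorem sep_lift {G G0 : SimpleGraph V} {X Y S Z : Set V} {x y : V}
    (hG : ∀ u v, G.Adj u v → G0.Adj u v ∨ (u = x ∧ v = y) ∨ (u = y ∧ v = x))
    (hS : SepXY G0 X Y S) (hy : ¬ Reach G0 X S y) (hZ : SepXY G0 X (insert x S) Z) :
    SepXY G X Y Z := by
  have hns : ¬ ∃ s ∈ S, Reach G0 X Z s := fun ⟨s, hs, hr⟩ => hZ s hr (Set.mem_insert_of_mem _ hs)
  have key : ∀ v, Reach G X Z v → Reach G0 X Z v := by
    intro v hv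
    induction hv with
    | base x hx hz => exact Reach.base x hx hz
    | step u w h ha hz ih =>
      rcases hG u w ha with h0 | ⟨rfl, rfl⟩ | ⟨rfl, rfl⟩
      · exact Reach.step u w ih h0 hz
      · exact absurd (Set.mem_insert _ _) (hZ _ ih)
      · rcases reach_switch (S := S) ih with h1 | h1
        · exact absurd h1 hy
        · exact absurd h1 hns
  intro v hv hvY
  rcases reach_switch (S := S) (key v hv) with h1 | h1
  · exact hS v h1 hvY
  · exact hns h1

/-- structure of a full linkage onto a set of size k -/
theorem linked_full {G : SimpleGraph V} {X P : Set V} {k : ℕ} (hPf : P.Finite) (hP : P.ncard = k)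
    (h : Linked G X P k) : ∃ (a b : Fin k → V) (p : ∀ i, G.Walk (a i) (b i)),
      (∀ i, (p i).IsPath ∧ a i ∈ X ∧ b i ∈ P) ∧
      (∀ i j v, v ∈ (p i).support → v ∈ (p j).support → i = j) ∧
      Function.Injective b ∧ (∀ v ∈ P, ∃ i, b i = v) ∧
      (∀ i, ∀ v ∈ P, v ∈ (p i).support → v = b i) := by
  obtain ⟨Q, hQ, hd⟩ := h
  have hinj : Function.Injective (fun i => (Q i).2.1) := by
    intro i j hij
    refine hd i j (Q i).2.1 (Walk.end_mem_support _) ?_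
    have : (Q i).2.1 = (Q j).2.1 := hij
    rw [this]; exact Walk.end_mem_support _
  have hsurj : ∀ v ∈ P, ∃ i, (Q i).2.1 = v := by
    have : Set.range (fun i => (Q i).2.1) = P := by
      apply Set.eq_of_subset_of_ncard_le
      · rintro _ ⟨i, rfl⟩; exact (hQ i).2.2
      · rw [hP, ← Set.image_univ, Set.ncard_image_of_injective _ hinj, Set.ncard_univ]; simp
      · exact hPf
    intro v hv
    rw [← this] at hv
    exact hv
  refine ⟨fun i => (Q i).1, fun i => (Q i).2.1, fun i => (Q i).2.2, hQ, hd, hinj, hsurj, ?_⟩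
  intro i v hv hvi
  obtain ⟨j, rfl⟩ := hsurj v hv
  have := hd i j _ hvi (Walk.end_mem_support _)
  subst this; rfl

theorem reach_prefix {G : SimpleGraph V} {X P S : Set V} (hSP : S ⊆ P) {a b : V} (p : G.Walk a b)
    (hp : p.IsPath) (ha : a ∈ X) (h : ∀ v ∈ P, v ∈ p.support → v = b) {v : V}
    (hv : v ∈ p.support) (hvS : v ∉ S) : Reach G X S v := by
  classical
  refine reach_of_walk (p.takeUntil v hv) ha ?_ v (Walk.end_mem_support _)
  intro w hw hwS
  have hwb := h w (hSP hwS) (p.support_takeUntil_subset_support hv hw)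
  subst hwb
  by_cases hwv : w = v
  · subst hwv; exact hvS hwS
  · exact Walk.endpoint_notMem_support_takeUntil hp hv (fun h => hwv h) hw

theorem goering_combine {G G0 : SimpleGraph V} (hle : G0 ≤ G) {X Y S : Set V} {x y : V} {k : ℕ}
    (hxy : G.Adj x y) (hSf : S.Finite) (hS : SepXY G0 X Y S)
    (hxS : x ∉ S) (hyS : y ∉ S) (hk : S.ncard + 1 = k)
    (h1 : Linked G0 X (insert x S) k) (h2 : Linked G0 Y (insert y S) k) : Linked G X Y k := by
  classical
  obtain ⟨a, b, p, hp, hpd, hbi, hbs, hpb⟩ := linked_full (hSf.insert x)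
    (by rw [Set.ncard_insert_of_notMem hxS hSf, hk]) h1
  obtain ⟨c, d, q, hq, hqd, hdi, hds, hqb⟩ := linked_full (hSf.insert y)
    (by rw [Set.ncard_insert_of_notMem hyS hSf, hk]) h2
  have hmeet : ∀ i j v, v ∈ (p i).support → v ∈ (q j).support → v ∈ S := by
    intro i j v hi hj
    by_contra hvS
    have r1 := reach_prefix (Set.subset_insert x S) (p i) (hp i).1 (hp i).2.1 (hpb i) hi hvS
    have r2 := reach_prefix (Set.subset_insert y S) (q j) (hq j).1 (hq j).2.1 (hqb j) hj hvS
    obtain ⟨y', hy', hr⟩ := reach_back r2 r1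
    exact hS y' hr hy'
  let f : V → V := fun v => if v = x then y else v
  have hf : ∀ i, ∃ j, d j = f (b i) := by
    intro i
    apply hds
    rcases (hp i).2.2 with h | h
    · simp [f, h]
    · have : b i ≠ x := fun e => hxS (e ▸ h)
      simp only [f, this, if_false]
      exact Set.mem_insert_of_mem _ h
  choose σ hσ using hf
  have hfi : ∀ i i', f (b i) = f (b i') → i = i' := by
    intro i i' h
    apply hbi
    have m1 := (hp i).2.2
    have m2 := (hp i').2.2
    simp only [f] at h
    split_ifs at h with e1 e2 e2
    · rw [e1, e2]
    · rcases m2 with m2 | m2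
      · exact absurd m2 e2
      · exact absurd (h ▸ m2) hyS
    · rcases m1 with m1 | m1
      · exact absurd m1 e1
      · exact absurd (h ▸ m1) hyS
    · exact h
  have hσi : Function.Injective σ := by
    intro i i' h
    apply hfi
    rw [← hσ, ← hσ, h]
  have hcross : ∀ i j v, v ∈ (p i).support → v ∈ (q j).support → σ i = j := by
    intro i j v hi hj
    have hv := hmeet i j v hi hj
    have e1 := hpb i v (Set.mem_insert_of_mem _ hv) hi
    have e2 := hqb j v (Set.mem_insert_of_mem _ hv) hj
    apply hdi
    rw [hσ, ← e1, ← e2]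
    have : v ≠ x := fun e => hxS (e ▸ hv)
    simp [f, this]
  refine linked_of_walks (fun i => {v | v ∈ (p i).support ∨ v ∈ (q (σ i)).support}) ?_ ?_
  · intro i
    refine ⟨a i, (hp i).2.1, c (σ i), (hq _).2.1, ?_⟩
    have hw : ∃ w : G.Walk (b i) (d (σ i)), ∀ v ∈ w.support, v = b i ∨ v = d (σ i) := by
      by_cases e : b i = x
      · have e' : d (σ i) = y := by rw [hσ]; simp [f, e]
        rw [e, e']
        exact ⟨Walk.cons hxy Walk.nil, by simp⟩
      · have e' : d (σ i) = b i := by rw [hσ]; simp [f, e]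
        rw [e']
        exact ⟨Walk.nil, by simp⟩
    obtain ⟨w, hw⟩ := hw
    refine ⟨((p i).mapLe hle).append (w.append ((q (σ i)).mapLe hle).reverse), ?_⟩
    intro v hv
    rw [Walk.mem_support_append_iff, Walk.mem_support_append_iff] at hv
    rcases hv with hv | hv | hv
    · left; simpa using hv
    · rcases hw v hv with rfl | rfl
      · left; exact Walk.end_mem_support _
      · right; exact Walk.end_mem_support _
    · right; simpa using hv
  · rintro i j v (h | h) (h' | h')
    · exact hpd i j v h h'
    · exact hσi (hcross i _ v h h')
    · exact (hσi (hcross j _ v h' h)).symm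
    · exact hσi (hqd _ _ v h h')

theorem menger_bot {X Y : Set V} {k : ℕ} (G : SimpleGraph V) (hG : ∀ u v, ¬ G.Adj u v) :
    Linked G X Y k ∨ ∃ Z : Set V, Z.Finite ∧ Z.ncard < k ∧ SepXY G X Y Z := by
  by_cases hfin : (X ∩ Y).Finite ∧ (X ∩ Y).ncard < k
  · right
    refine ⟨X ∩ Y, hfin.1, hfin.2, ?_⟩
    intro v hv hvY
    cases hv with
    | base _ hx hz => exact hz ⟨hx, hvY⟩
    | step u w h ha hz => exact hG _ _ ha
  · left
    have : ∃ t ⊆ X ∩ Y, t.Finite ∧ t.ncard = k := by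
      by_cases hf : (X ∩ Y).Finite
      · have : k ≤ (X ∩ Y).ncard := by
          by_contra h; exact hfin ⟨hf, by omega⟩
        obtain ⟨t, ht, hc⟩ := Set.exists_subset_card_eq this
        exact ⟨t, ht, hf.subset ht, hc⟩
      · obtain ⟨t, ht, hc⟩ := Set.Infinite.exists_subset_card_eq hf k
        exact ⟨t, ht, t.finite_toSet, by simpa using hc⟩
    obtain ⟨t, ht, htf, hc⟩ := this
    have := htf.to_subtype
    have e := Finite.equivFin t
    rw [Nat.card_coe_set_eq, hc] at e
    refine linked_of_walks (fun i => {((e.symm i : t) : V)}) ?_ ?_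
    · intro i
      exact ⟨e.symm i, (ht (e.symm i).2).1, e.symm i, (ht (e.symm i).2).2, Walk.nil, by simp⟩
    · intro i j v hi hj
      apply e.symm.injective
      apply Subtype.ext
      rw [Set.mem_singleton_iff] at hi hj
      rw [← hi, ← hj]

theorem menger_fin (k : ℕ) (n : ℕ) : ∀ (G : SimpleGraph V), G.edgeSet.Finite → G.edgeSet.ncard = n →
    ∀ X Y : Set V, Linked G X Y k ∨ ∃ Z : Set V, Z.Finite ∧ Z.ncard < k ∧ SepXY G X Y Z := by
  induction n with
  | zero =>
    intro G hf hc X Y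
    apply menger_bot
    intro u v huv
    rw [Set.ncard_eq_zero hf] at hc
    have : s(u, v) ∈ G.edgeSet := huv
    rw [hc] at this
    exact this
  | succ n ih =>
    intro G hf hc X Y
    by_contra hcon
    push Not at hcon
    obtain ⟨hL, hZ⟩ := hcon
    have hne : G.edgeSet.Nonempty := by
      rw [← Set.ncard_pos hf]; omega
    obtain ⟨e, he⟩ := hne
    let G0 := G.deleteEdges {e}
    have hle : G0 ≤ G := G.deleteEdges_le _
    have hes : G0.edgeSet = G.edgeSet \ {e} := by simp [G0]
    have hf0 : G0.edgeSet.Finite := by rw [hes]; exact hf.sdiff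
    have hc0 : G0.edgeSet.ncard = n := by
      rw [hes, Set.ncard_sdiff_singleton_of_mem he, hc]; rfl
    have ih := ih G0 hf0 hc0
    rcases ih X Y with h | ⟨S, hSf, hSk, hS⟩
    · exact hL (h.mono hle subset_rfl subset_rfl)
    -- choose the orientation of e
    have hor : ∃ x y, s(x, y) = e ∧ Reach G0 X S x ∧ ¬ Reach G0 X S y := by
      by_contra hno
      push Not at hno
      apply hZ S hSf hSk
      have key : ∀ v, Reach G X S v → Reach G0 X S v := by
        intro v hv
        induction hv with
        | base x hx hz => exact Reach.base x hx hz
        | step u w h ha hz ih =>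
          by_cases hue : s(u, w) = e
          · exact hno u w hue ih
          · refine Reach.step u w ih ?_ hz
            simp [G0, ha, hue]
      intro v hv
      exact hS v (key v hv)
    obtain ⟨x, y, hxy, hx, hy⟩ := hor
    have hadj : G.Adj x y := by rw [← hxy] at he; exact he
    have hG : ∀ u v, G.Adj u v → G0.Adj u v ∨ (u = x ∧ v = y) ∨ (u = y ∧ v = x) := by
      intro u v huv
      by_cases hue : s(u, v) = e
      · right; rw [← hxy] at hue; simpa using hue
      · left; simp [G0, huv, hue]
    have hG' : ∀ u v, G.Adj u v → G0.Adj u v ∨ (u = y ∧ v = x) ∨ (u = x ∧ v = y) := by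
      intro u v huv
      rcases hG u v huv with h | h | h <;> tauto
    have hx' : ¬ Reach G0 Y S x := by
      intro h
      obtain ⟨y', hy', hr⟩ := reach_back h hx
      exact hS y' hr hy'
    have hself : ∀ (X' : Set V) (T : Set V), SepXY G0 X' T T := by
      intro X' T v hv; exact hv.notMem
    have hsx : SepXY G X Y (insert x S) := sep_lift hG hS hy (hself _ _)
    have hsy : SepXY G X Y (insert y S) := (sep_lift hG' hS.symm hx' (hself _ _)).symm
    have hxk : k ≤ (insert x S).ncard := by
      by_contra h; exact hZ _ (hSf.insert x) (by omega) hsx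
    have hyk : k ≤ (insert y S).ncard := by
      by_contra h; exact hZ _ (hSf.insert y) (by omega) hsy
    have hxS : x ∉ S := hx.notMem
    have hyS : y ∉ S := by
      intro h; rw [Set.insert_eq_of_mem h] at hyk; omega
    rw [Set.ncard_insert_of_notMem hxS hSf] at hxk
    rcases ih X (insert x S) with h1 | ⟨Z, hZf, hZk, hZs⟩
    · rcases ih Y (insert y S) with h2 | ⟨Z, hZf, hZk, hZs⟩
      · exact hL (goering_combine hle hadj hSf hS hxS hyS (by omega) h1 h2)
      · exact hZ Z hZf hZk (sep_lift hG' hS.symm hx' hZs).symm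
    · exact hZ Z hZf hZk (sep_lift hG hS hy hZs)

theorem menger (G : SimpleGraph V) (X Y : Set V) (k : ℕ) :
    Linked G X Y k ∨ ∃ Z : Set V, Z.Finite ∧ Z.ncard < k ∧ SepXY G X Y Z := by
  classical
  by_cases hL : Linked G X Y k
  · exact Or.inl hL
  right
  let GF : Finset V → SimpleGraph V := fun F =>
    { Adj := fun u v => G.Adj u v ∧ u ∈ F ∧ v ∈ F
      symm := ⟨fun u v h => ⟨h.1.symm, h.2.2, h.2.1⟩⟩
      loopless := ⟨fun u h => G.loopless.irrefl u h.1⟩ }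
  have hGF : ∀ F, GF F ≤ G := fun F u v h => h.1
  have hfin : ∀ F, (GF F).edgeSet.Finite := by
    intro F
    refine (F.sym2.finite_toSet).subset ?_
    intro e
    induction e with
    | h u v =>
      intro he
      have he : G.Adj u v ∧ u ∈ F ∧ v ∈ F := he
      simp [he.2]
  have hZ : ∀ F : Finset V, ∃ Z : Set V, Z.Finite ∧ Z.ncard < k ∧
      SepXY (GF F) (X ∩ F) (Y ∩ F) Z := by
    intro F
    rcases menger_fin k _ (GF F) (hfin F) rfl (X ∩ F) (Y ∩ F) with h | h
    · exact absurd (h.mono (hGF F) Set.inter_subset_left Set.inter_subset_left) hL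
    · exact h
  choose Z hZf hZk hZs using hZ
  let U : Ultrafilter (Finset V) := Ultrafilter.of Filter.atTop
  have hU : (U : Filter (Finset V)) ≤ Filter.atTop := Ultrafilter.of_le _
  let Z0 : Set V := {v | ∀ᶠ F in (U : Filter (Finset V)), v ∈ Z F}
  have hcard : ∀ t : Finset V, (t : Set V) ⊆ Z0 → t.card < k := by
    intro t ht
    have h1 : ∀ᶠ F in (U : Filter (Finset V)), ∀ v ∈ t, v ∈ Z F :=
      (Filter.eventually_all_finset t).2 (fun v hv => ht hv)
    obtain ⟨F, hF⟩ := h1.exists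
    have : (t : Set V).ncard ≤ (Z F).ncard := Set.ncard_le_ncard (fun v hv => hF v hv) (hZf F)
    rw [Set.ncard_coe_finset] at this
    exact this.trans_lt (hZk F)
  have hZ0f : Z0.Finite := by
    by_contra h
    obtain ⟨t, ht, hc⟩ := Set.Infinite.exists_subset_card_eq h k
    have := hcard t ht
    omega
  refine ⟨Z0, hZ0f, ?_, ?_⟩
  · have := hcard hZ0f.toFinset (by simp)
    rwa [Set.ncard_eq_toFinset_card _ hZ0f]
  · intro v hv hvY
    obtain ⟨a, ha, p, hp⟩ := walk_of_reach hv
    have h1 : ∀ᶠ F in (U : Filter (Finset V)), ∃ w ∈ (p.support.toFinset : Set V), w ∈ Z F := by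
      refine Filter.Eventually.mono (hU (Filter.eventually_ge_atTop p.support.toFinset)) ?_
      intro F hF
      by_contra hno
      push Not at hno
      have hmem : ∀ w ∈ p.support, w ∈ F := fun w hw => hF (by simpa using hw)
      have : ∀ w ∈ p.support, Reach (GF F) (X ∩ F) (Z F) w := by
        apply walk_ind
        · exact Reach.base _ ⟨ha, hmem _ p.start_mem_support⟩ (hno _ (by simp))
        · intro u w huw hu
          exact Reach.step u w hu ⟨p.adj_of_mem_edges huw,
            hmem _ (p.fst_mem_support_of_mem_edges huw),
            hmem _ (p.snd_mem_support_of_mem_edges huw)⟩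
            (hno _ (by simpa using p.snd_mem_support_of_mem_edges huw))
      exact hZs F v (this v p.end_mem_support) ⟨hvY, hmem _ p.end_mem_support⟩
    rw [Ultrafilter.eventually_exists_mem_iff (Finset.finite_toSet _)] at h1
    obtain ⟨w, hw, hwZ⟩ := h1
    exact hp w (by simpa using hw) hwZ

theorem getVert_edge {G : SimpleGraph V} {a b : V} (p : G.Walk a b) :
    ∀ i, i < p.length → s(p.getVert i, p.getVert (i + 1)) ∈ p.edges := by
  induction p with
  | nil => intro i hi; simp at hi
  | cons h p ih =>
    intro i hi
    cases i with
    | zero => simp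
    | succ i =>
      rw [Walk.length_cons] at hi
      rw [Walk.getVert_cons_succ, Walk.getVert_cons_succ, Walk.edges_cons]
      exact List.mem_cons_of_mem _ (ih i (by omega))

/-- A shortest `X`-`Y`-walk inside `U`. -/
theorem exists_shortest (K : SimpleGraph V) (X Y U : Set V)
    (h : ∃ a ∈ X, ∃ b ∈ Y, ∃ p : K.Walk a b, ∀ v ∈ p.support, v ∈ U) :
    ∃ a ∈ X, ∃ b ∈ Y, ∃ p : K.Walk a b, p.IsPath ∧ (∀ v ∈ p.support, v ∈ U) ∧
      (∀ v ∈ p.support, v ∈ X → v = a) ∧ (∀ v ∈ p.support, v ∈ Y → v = b) ∧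
      (∀ u ∈ p.support, ∀ v ∈ p.support, K.Adj u v → s(u, v) ∈ p.edges) := by
  classical
  have hex : ∃ n : ℕ, ∃ a ∈ X, ∃ b ∈ Y, ∃ p : K.Walk a b, (∀ v ∈ p.support, v ∈ U) ∧
      p.length = n := by
    obtain ⟨a, ha, b, hb, p, hp⟩ := h
    exact ⟨_, a, ha, b, hb, p, hp, rfl⟩
  obtain ⟨a, ha, b, hb, p, hp, hlen⟩ := Nat.find_spec hex
  have hmin : ∀ a' ∈ X, ∀ b' ∈ Y, ∀ q : K.Walk a' b', (∀ v ∈ q.support, v ∈ U) →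
      p.length ≤ q.length := by
    intro a' ha' b' hb' q hq
    rw [hlen]
    exact Nat.find_min' hex ⟨a', ha', b', hb', q, hq, rfl⟩
  clear hlen
  refine ⟨a, ha, b, hb, p, ?_, hp, ?_, ?_, ?_⟩
  · have h1 := hmin a ha b hb p.bypass (fun v hv => hp v (p.support_bypass_subset_support hv))
    rw [← p.bypass_eq_self_of_length_le_length_bypass h1]
    exact p.bypass_isPath
  · intro v hv hvX
    by_contra hne
    have h1 := hmin v hvX b hb (p.dropUntil v hv)
      (fun w hw => hp w (p.support_dropUntil_subset_support hv hw))
    have := Walk.length_dropUntil_lt_length hv hne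
    omega
  · intro v hv hvY
    by_contra hne
    have h1 := hmin a ha v hvY (p.takeUntil v hv)
      (fun w hw => hp w (p.support_takeUntil_subset_support hv hw))
    have := Walk.length_takeUntil_lt_length hv hne
    omega
  · have key : ∀ i j, i < j → j ≤ p.length → K.Adj (p.getVert i) (p.getVert j) →
        s(p.getVert i, p.getVert j) ∈ p.edges := by
      intro i j hij hj hadj
      have h1 := hmin a ha b hb ((p.take i).append (Walk.cons hadj (p.drop j))) (by
        intro w hw
        rw [Walk.mem_support_append_iff, Walk.support_cons, List.mem_cons] at hw
        rcases hw with hw | rfl | hw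
        · exact hp w ((p.isSubwalk_take i).support_subset hw)
        · exact hp _ (p.getVert_mem_support i)
        · exact hp w ((p.isSubwalk_drop j).support_subset hw))
      rw [Walk.length_append, Walk.length_cons, Walk.take_length, Walk.drop_length] at h1
      have : j = i + 1 := by omega
      subst this
      exact getVert_edge p i (by omega)
    intro u hu v hv huv
    rw [Walk.mem_support_iff_exists_getVert] at hu hv
    obtain ⟨i, rfl, hi⟩ := hu
    obtain ⟨j, rfl, hj⟩ := hv
    rcases lt_trichotomy i j with hij | hij | hij
    · exact key i j hij hj huv
    · subst hij; exact absurd huv (K.loopless.irrefl _)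
    · rw [Sym2.eq_swap]; exact key j i hij hi huv.symm

open Classical in
theorem path_degree {G : SimpleGraph V} {x y : V} (p : G.Walk x y) (hp : p.IsPath) :
    ∀ u ∈ p.support, {w | s(u, w) ∈ p.edges}.Finite ∧
    {w | s(u, w) ∈ p.edges}.ncard + (if u = x then 1 else 0) + (if u = y then 1 else 0) = 2 := by
  induction p with
  | nil => intro u hu; simp at hu; simp [hu]
  | @cons x z y h p ih =>
    rw [Walk.cons_isPath_iff] at hp
    have ih := ih hp.1
    have hxy : x ≠ y := by
      rintro rfl; exact hp.2 p.end_mem_support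
    have hxz : x ≠ z := h.ne
    have hnx : ∀ w, s(x, w) ∉ p.edges := fun w hw => hp.2 (p.fst_mem_support_of_mem_edges hw)
    intro u hu
    rw [Walk.support_cons, List.mem_cons] at hu
    rcases hu with rfl | hu
    · have : {w | s(u, w) ∈ (Walk.cons h p).edges} = {z} := by
        ext w
        simp only [Walk.edges_cons, List.mem_cons, Set.mem_ofPred_eq, hnx, or_false,
          Set.mem_singleton_iff]
        constructor
        · intro hh
          rw [Sym2.eq_iff] at hh
          tauto
        · rintro rfl; rfl
      rw [this]
      simp [hxy]
    · have hux : u ≠ x := by rintro rfl; exact hp.2 hu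
      obtain ⟨hfin, hc⟩ := ih u hu
      by_cases huz : u = z
      · subst huz
        have : {w | s(u, w) ∈ (Walk.cons h p).edges} = insert x {w | s(u, w) ∈ p.edges} := by
          ext w
          simp only [Walk.edges_cons, List.mem_cons, Set.mem_ofPred_eq, Set.mem_insert_iff]
          constructor
          · rintro (hh | hh)
            · left
              rw [Sym2.eq_iff] at hh
              tauto
            · right; exact hh
          · rintro (rfl | hh)
            · left; exact Sym2.eq_swap
            · right; exact hh
        rw [this]
        refine ⟨hfin.insert x, ?_⟩
        rw [Set.ncard_insert_of_notMem (by
          intro hh; exact hp.2 (p.snd_mem_support_of_mem_edges hh)) hfin]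
        simp only [if_true, hux, if_false] at hc ⊢
        omega
      · have : {w | s(u, w) ∈ (Walk.cons h p).edges} = {w | s(u, w) ∈ p.edges} := by
          ext w
          simp only [Walk.edges_cons, List.mem_cons, Set.mem_ofPred_eq]
          constructor
          · rintro (hh | hh)
            · rw [Sym2.eq_iff] at hh
              tauto
            · exact hh
          · exact Or.inr
        rw [this]
        refine ⟨hfin, ?_⟩
        simp only [hux, huz, if_false] at hc ⊢
        omega

/-- The state maintained through the induction over the colour classes. -/
def GoodSys (G : SimpleGraph V) (X Y : Set V) (E : Set (Sym2 V)) (m : ℕ) : Prop :=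
  ∃ P : Fin m → PathPkg G, (∀ i, IsXYPath G X Y (P i)) ∧
    (∀ i j v, v ∈ (P i).2.2.support → v ∈ (P j).2.2.support → i = j) ∧
    (∀ i, ∀ v ∈ (P i).2.2.support, v ∈ X → v = (P i).1) ∧
    (∀ i, ∀ v ∈ (P i).2.2.support, v ∈ Y → v = (P i).2.1) ∧
    ∀ i j u v, u ∈ (P i).2.2.support → v ∈ (P j).2.2.support → s(u, v) ∈ E →
      s(u, v) ∈ (P i).2.2.edges

theorem good_init {G : SimpleGraph V} {X Y : Set V} {m : ℕ} (h : Linked G X Y m) :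
    GoodSys G X Y ∅ m := by
  obtain ⟨P, hP, hd⟩ := h
  have := fun i => exists_shortest G X Y {v | v ∈ (P i).2.2.support}
    ⟨_, (hP i).2.1, _, (hP i).2.2, (P i).2.2, fun v hv => hv⟩
  choose a ha b hb p hp hpU hpX hpY hpE using this
  refine ⟨fun i => ⟨a i, b i, p i⟩, fun i => ⟨hp i, ha i, hb i⟩, ?_, hpX, hpY, ?_⟩
  · intro i j v hi hj
    exact hd i j v (hpU i v hi) (hpU j v hj)
  · intro i j u v _ _ h
    exact absurd h (Set.notMem_empty _)

theorem matching_unique {G : SimpleGraph V} {M : Set (Sym2 V)} (hM : IsInducedMatching G M)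
    {u v w : V} (h1 : s(u, v) ∈ M) (h2 : s(u, w) ∈ M) : v = w := by
  by_contra hne
  refine (hM.2 _ h1 _ h2 ?_ u (by simp) u (by simp)).1 rfl
  intro h
  rw [Sym2.eq_iff] at h
  rcases h with ⟨_, h⟩ | ⟨h, h'⟩
  · exact hne h
  · exact hne (h'.trans h)

open Classical in
theorem same_degree {G K : SimpleGraph V} {X Y : Set V} {a b c d : V} (p : G.Walk a b)
    (q : K.Walk c d) (hp : p.IsPath) (hq : q.IsPath) (ha : a ∈ X) (hb : b ∈ Y)
    (hc : c ∈ X) (hd : d ∈ Y)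
    (hpX : ∀ v ∈ p.support, v ∈ X → v = a) (hpY : ∀ v ∈ p.support, v ∈ Y → v = b)
    (hqX : ∀ v ∈ q.support, v ∈ X → v = c) (hqY : ∀ v ∈ q.support, v ∈ Y → v = d)
    {u : V} (hup : u ∈ p.support) (huq : u ∈ q.support)
    (hsub : ∀ w, s(u, w) ∈ q.edges → s(u, w) ∈ p.edges) :
    ∀ w, s(u, w) ∈ p.edges → s(u, w) ∈ q.edges := by
  obtain ⟨hf1, h1⟩ := path_degree p hp u hup
  obtain ⟨hf2, h2⟩ := path_degree q hq u huq
  have e1 : (u = a) = (u = c) := by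
    apply propext
    constructor
    · rintro rfl; exact hqX _ huq ha
    · rintro rfl; exact hpX _ hup hc
  have e2 : (u = b) = (u = d) := by
    apply propext
    constructor
    · rintro rfl; exact hqY _ huq hb
    · rintro rfl; exact hpY _ hup hd
  simp only [e1, e2] at h1
  have : {w | s(u, w) ∈ q.edges} = {w | s(u, w) ∈ p.edges} :=
    Set.eq_of_subset_of_ncard_le hsub (by omega) hf1
  intro w hw
  have hw : w ∈ {w | s(u, w) ∈ p.edges} := hw
  rw [← this] at hw
  exact hw

theorem good_step {G : SimpleGraph V} {X Y : Set V} {E M : Set (Sym2 V)} {m : ℕ}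
    (hE : E ⊆ G.edgeSet) (hM : IsInducedMatching G M) (h : GoodSys G X Y E (2 * m)) :
    GoodSys G X Y (E ∪ M) m := by
  classical
  obtain ⟨P, hP, hd, hPX, hPY, hPE⟩ := h
  let W : Set V := {v | ∃ i, v ∈ (P i).2.2.support}
  let K : SimpleGraph V :=
    { Adj := fun u v => (∃ i, s(u, v) ∈ (P i).2.2.edges) ∨ (s(u, v) ∈ M ∧ u ∈ W ∧ v ∈ W)
      symm := ⟨by
        rintro u v (⟨i, hi⟩ | ⟨h1, h2, h3⟩)
        · exact Or.inl ⟨i, by rwa [Sym2.eq_swap]⟩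
        · exact Or.inr ⟨by rwa [Sym2.eq_swap], h3, h2⟩⟩
      loopless := ⟨by
        rintro u (⟨i, hi⟩ | ⟨h1, h2, h3⟩)
        · exact G.loopless.irrefl u ((P i).2.2.adj_of_mem_edges hi)
        · exact G.loopless.irrefl u (hM.1 h1)⟩ }
  have hKG : K ≤ G := by
    rintro u v (⟨i, hi⟩ | ⟨h1, h2, h3⟩)
    · exact (P i).2.2.adj_of_mem_edges hi
    · exact hM.1 h1
  have hKW : ∀ u v, K.Adj u v → u ∈ W ∧ v ∈ W := by
    rintro u v (⟨i, hi⟩ | ⟨h1, h2, h3⟩)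
    · exact ⟨⟨i, Walk.fst_mem_support_of_mem_edges _ hi⟩, ⟨i, Walk.snd_mem_support_of_mem_edges _ hi⟩⟩
    · exact ⟨h2, h3⟩
  let r : Setoid V :=
    { r := fun u v => u = v ∨ (s(u, v) ∈ M ∧ u ∈ W ∧ v ∈ W)
      iseqv := by
        refine ⟨fun u => Or.inl rfl, ?_, ?_⟩
        · rintro u v (rfl | ⟨h1, h2, h3⟩)
          · exact Or.inl rfl
          · exact Or.inr ⟨by rwa [Sym2.eq_swap], h3, h2⟩
        · rintro u v w (rfl | ⟨h1, h2, h3⟩) (rfl | ⟨h4, h5, h6⟩)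
          · exact Or.inl rfl
          · exact Or.inr ⟨h4, h5, h6⟩
          · exact Or.inr ⟨h1, h2, h3⟩
          · left
            rw [Sym2.eq_swap] at h1
            exact matching_unique hM h1 h4 }
  let π : V → Quotient r := fun v => Quotient.mk r v
  have hπ : ∀ u v, π u = π v ↔ (u = v ∨ (s(u, v) ∈ M ∧ u ∈ W ∧ v ∈ W)) := by
    intro u v
    exact Quotient.eq (r := r)
  let G' : SimpleGraph (Quotient r) :=
    { Adj := fun a b => a ≠ b ∧ ∃ u v, π u = a ∧ π v = b ∧ K.Adj u v
      symm := ⟨by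
        rintro a b ⟨h, u, v, h1, h2, h3⟩
        exact ⟨h.symm, v, u, h2, h1, h3.symm⟩⟩
      loopless := ⟨by rintro a ⟨h, _⟩; exact h rfl⟩ }
  rcases menger G' (π '' (X ∩ W)) (π '' (Y ∩ W)) m with hL | ⟨Z, hZf, hZm, hZs⟩
  swap
  · exfalso
    have hz : ∀ i, ∃ z ∈ (P i).2.2.support, π z ∈ Z := by
      intro i
      by_contra hno
      push Not at hno
      have hr : ∀ v ∈ (P i).2.2.support, Reach G' (π '' (X ∩ W)) Z (π v) := by
        apply walk_ind
        · exact Reach.base _ ⟨_, ⟨(hP i).2.1, i, Walk.start_mem_support _⟩, rfl⟩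
            (hno _ (Walk.start_mem_support _))
        · intro u v huv hu
          by_cases he : π u = π v
          · rw [← he]; exact hu
          · exact Reach.step _ _ hu ⟨he, u, v, rfl, rfl, Or.inl ⟨i, huv⟩⟩
              (hno _ (Walk.snd_mem_support_of_mem_edges _ huv))
      exact hZs _ (hr _ (Walk.end_mem_support _))
        ⟨_, ⟨(hP i).2.2, i, Walk.end_mem_support _⟩, rfl⟩
    choose z hz hzZ using hz
    have hzi : ∀ i j, z i = z j → i = j := by
      intro i j hij
      exact hd i j (z i) (hz i) (by rw [hij]; exact hz j)
    have hcard := Finset.card_le_mul_card_image_of_maps_to (s := (Finset.univ : Finset (Fin (2 * m))))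
      (t := hZf.toFinset) (f := fun i => π (z i)) (by intro i _; simpa using hzZ i) 2 (by
        intro b _
        by_contra hgt
        rw [not_le, Finset.two_lt_card] at hgt
        obtain ⟨i, hi, j, hj, l, hl, hij, hil, hjl⟩ := hgt
        simp only [Finset.mem_filter, Finset.mem_univ, true_and] at hi hj hl
        have h1 := (hπ (z i) (z j)).1 (by rw [hi, hj])
        have h2 := (hπ (z i) (z l)).1 (by rw [hi, hl])
        rcases h1 with h1 | h1
        · exact hij (hzi _ _ h1)
        rcases h2 with h2 | h2
        · exact hil (hzi _ _ h2)
        exact hjl (hzi _ _ (matching_unique hM h1.1 h2.1)))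
    rw [Finset.card_univ, Fintype.card_fin, ← Set.ncard_eq_toFinset_card _ hZf] at hcard
    omega
  obtain ⟨Q, hQ, hQd⟩ := hL
  have hlift : ∀ i, ∃ a ∈ X ∩ W, ∃ b ∈ Y ∩ W, ∃ p : K.Walk a b,
      ∀ v ∈ p.support, v ∈ {v | π v ∈ (Q i).2.2.support} := by
    intro i
    let U : Set V := {v | π v ∈ (Q i).2.2.support}
    have hcls : ∀ u v, π u = π v → Reach K (X ∩ W) Uᶜ u → Reach K (X ∩ W) Uᶜ v := by
      intro u v huv hu
      rcases (hπ u v).1 huv with rfl | hh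
      · exact hu
      · refine Reach.step u v hu (Or.inr hh) ?_
        have := hu.notMem
        rw [Set.notMem_compl_iff] at this ⊢
        change π v ∈ (Q i).2.2.support
        rw [← huv]; exact this
    have hr : ∀ c ∈ (Q i).2.2.support, ∀ u, π u = c → Reach K (X ∩ W) Uᶜ u := by
      apply walk_ind
      · intro u hu
        obtain ⟨x, hx, hxe⟩ := (hQ i).2.1
        refine hcls x u (by rw [hu, hxe]) (Reach.base x hx ?_)
        rw [Set.notMem_compl_iff]
        change π x ∈ (Q i).2.2.support
        rw [hxe]; exact Walk.start_mem_support _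
      · intro c d hcd hc v hv
        obtain ⟨_, u0, v0, h1, h2, h3⟩ := (Q i).2.2.adj_of_mem_edges hcd
        refine hcls v0 v (by rw [hv, h2]) (Reach.step u0 v0 (hc u0 h1) h3 ?_)
        rw [Set.notMem_compl_iff]
        change π v0 ∈ (Q i).2.2.support
        rw [h2]; exact Walk.snd_mem_support_of_mem_edges _ hcd
    obtain ⟨y, hy, hye⟩ := (hQ i).2.2
    obtain ⟨a, ha, p, hp⟩ := walk_of_reach (hr _ (Walk.end_mem_support _) y hye)
    exact ⟨a, ha, y, hy, p, fun v hv => by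
      have := hp v hv
      rwa [Set.notMem_compl_iff] at this⟩
  have := fun i => exists_shortest K (X ∩ W) (Y ∩ W) _ (hlift i)
  choose a ha b hb p hp hpU hpX hpY hpE using this
  have hpW : ∀ i, ∀ v ∈ (p i).support, v ∈ W := by
    intro i
    apply walk_ind
    · exact (ha i).2
    · intro u v huv _
      exact (hKW u v ((p i).adj_of_mem_edges huv)).2
  have hpX' : ∀ i, ∀ v ∈ (p i).support, v ∈ X → v = a i :=
    fun i v hv hvX => hpX i v hv ⟨hvX, hpW i v hv⟩
  have hpY' : ∀ i, ∀ v ∈ (p i).support, v ∈ Y → v = b i :=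
    fun i v hv hvY => hpY i v hv ⟨hvY, hpW i v hv⟩
  have hpd : ∀ i j u v, u ∈ (p i).support → v ∈ (p j).support → π u = π v → i = j := by
    intro i j u v hu hv huv
    refine hQd i j (π u) (hpU i u hu) ?_
    rw [huv]; exact hpU j v hv
  -- the key degree argument
  have hkey : ∀ i u v, u ∈ (p i).support → v ∈ W → s(u, v) ∈ E →
      (¬ ∃ w ∈ W, s(u, w) ∈ M) → s(u, v) ∈ (p i).edges := by
    intro i u v hu hv huv hno
    obtain ⟨i0, hi0⟩ := hpW i u hu
    obtain ⟨j0, hj0⟩ := hv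
    have hold := hPE i0 j0 u v hi0 hj0 huv
    refine same_degree (P i0).2.2 (p i) (hP i0).1 (hp i) (hP i0).2.1 (hP i0).2.2
      (ha i).1 (hb i).1 (hPX i0) (hPY i0) (hpX' i) (hpY' i) hi0 hu ?_ v hold
    intro w hw
    rcases (p i).adj_of_mem_edges hw with ⟨i1, hi1⟩ | ⟨h1, h2, h3⟩
    · have := hd i0 i1 u hi0 (Walk.fst_mem_support_of_mem_edges _ hi1)
      subst this
      exact hi1
    · exact absurd ⟨w, h3, h1⟩ hno
  refine ⟨fun i => ⟨a i, b i, (p i).mapLe hKG⟩, fun i => ⟨?_, (ha i).1, (hb i).1⟩, ?_, ?_, ?_, ?_⟩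
  · exact (Walk.isPath_mapLe hKG).2 (hp i)
  · intro i j v hi hj
    simp only [Walk.support_mapLe_eq_support] at hi hj
    exact hpd i j v v hi hj rfl
  · intro i v hv
    simp only [Walk.support_mapLe_eq_support] at hv
    exact hpX' i v hv
  · intro i v hv
    simp only [Walk.support_mapLe_eq_support] at hv
    exact hpY' i v hv
  · intro i j u v hu hv huv
    simp only [Walk.support_mapLe_eq_support, Walk.edges_mapLe_eq_edges] at hu hv ⊢
    by_cases hm : s(u, v) ∈ M
    · have hK : s(u, v) ∈ M ∧ u ∈ W ∧ v ∈ W := ⟨hm, hpW i u hu, hpW j v hv⟩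
      have := hpd i j u v hu hv ((hπ u v).2 (Or.inr hK))
      subst this
      exact hpE i u hu v hv (Or.inr hK)
    · have huvE : s(u, v) ∈ E := by
        rcases huv with h | h
        · exact h
        · exact absurd h hm
      by_cases h1 : ∃ w ∈ W, s(u, w) ∈ M
      · by_cases h2 : ∃ w ∈ W, s(v, w) ∈ M
        · exfalso
          obtain ⟨w, _, hw⟩ := h1
          obtain ⟨t, _, ht⟩ := h2
          refine (hM.2 _ hw _ ht ?_ u (by simp) v (by simp)).2 (hE huvE)
          intro he
          have hne : u ≠ v := (show G.Adj u v from hE huvE).ne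
          rw [Sym2.eq_iff] at he
          rcases he with ⟨h, _⟩ | ⟨_, h⟩
          · exact hne h
          · rw [h] at hw; exact hm hw
        · have := hkey j v u hv (hpW i u hu) (by rwa [Sym2.eq_swap]) h2
          have hij := hpd i j u u hu (Walk.snd_mem_support_of_mem_edges _ this) rfl
          subst hij
          rwa [Sym2.eq_swap]
      · exact hkey i u v hu (hpW j v hv) huvE h1

theorem good_iterate {G : SimpleGraph V} {X Y : Set V} {k : ℕ} (n : ℕ) :
    ∀ (E : Set (Sym2 V)) (M : Fin n → Set (Sym2 V)), E ⊆ G.edgeSet →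
      (∀ i, IsInducedMatching G (M i)) → GoodSys G X Y E (2 ^ n * k) →
      GoodSys G X Y (E ∪ ⋃ i, M i) k := by
  induction n with
  | zero =>
    intro E M _ _ h
    simpa using h
  | succ n ih =>
    intro E M hE hM h
    have h' : GoodSys G X Y E (2 * (2 ^ n * k)) := by
      rwa [show 2 * (2 ^ n * k) = 2 ^ (n + 1) * k by ring]
    have h1 := good_step hE (hM 0) h'
    have h2 := ih (E ∪ M 0) (fun i => M i.succ) (Set.union_subset hE (hM 0).1)
      (fun i => hM i.succ) h1
    have : (E ∪ M 0 ∪ ⋃ i : Fin n, M i.succ) = E ∪ ⋃ i, M i := by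
      ext e
      simp only [Set.mem_union, Set.mem_iUnion, Fin.exists_fin_succ, or_assoc]
    rwa [this] at h2

theorem statement_0 (G : SimpleGraph V) (X Y : Set V) (k : ℕ)
    (hχ : ∃ n, HasStrongEdgeColoring G n) :
    (∃ P : Fin k → PathPkg G,
        (∀ i, IsXYPath G X Y (P i)) ∧
        Pairwise fun i j => PkgNonAdj G (P i) (P j)) ∨
    (∃ Z : Set V, Z.Finite ∧ Z.ncard < 2 ^ strongChromaticIndex G * k ∧
        XYSeparates G X Y Z) := by
  obtain ⟨M, hM, -, hU⟩ : HasStrongEdgeColoring G (strongChromaticIndex G) := Nat.sInf_mem hχ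
  rcases menger G X Y (2 ^ strongChromaticIndex G * k) with h | ⟨Z, hZf, hZk, hZs⟩
  · left
    have h1 := good_iterate _ ∅ M (Set.empty_subset _) hM (good_init h)
    rw [Set.empty_union, hU] at h1
    obtain ⟨P, hP, hd, -, -, hPE⟩ := h1
    refine ⟨P, hP, ?_⟩
    intro i j hij a ha b hb
    refine ⟨?_, ?_⟩
    · rintro rfl
      exact hij (hd i j a ha hb)
    · intro hab
      have := hPE i j a b ha hb hab
      exact hij (hd i j b (Walk.snd_mem_support_of_mem_edges _ this) hb)
  · right
    refine ⟨Z, hZf, hZk, ?_⟩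
    intro p hp
    by_contra hno
    push Not at hno
    exact hZs _ (reach_of_walk p.2.2 hp.2.1 (fun v hv hvZ => hno v hvZ hv) _
      (Walk.end_mem_support _)) hp.2.2
end

section
/- Let G be a simple graph, let X, Y ⊆ V(G), and let k be a natural number. If G contains at least 2^{χ'_s(G)}·k pairwise disjoint X-Y-paths, then G contains k pairwise non-adjacent X-Y-paths, where χ'_s(G) denotes the strong chromatic index of G. -/
open SimpleGraph

universe u

variable {V : Type u}

section helpers

/-- Choice of representatives in a 2-regular bipartite multigraph (Hall). -/
theorem hall_two {T W : Type*} [Fintype T] [Fintype W] [DecidableEq T] [DecidableEq W]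
    (π : T → W) (τ : T → T) (hτ : Function.Injective τ)
    (h2 : ∀ w, (Finset.univ.filter (fun t => π t = w)).card = 2) :
    ∃ g : W → T, (∀ w, π (g w) = w) ∧ Function.Injective (fun w => π (τ (g w))) := by
  classical
  have hc : ∀ B : Finset W, (Finset.univ.filter (fun t => π t ∈ B)).card = 2 * B.card := by
    intro B
    rw [Finset.card_eq_sum_card_fiberwise (f := π) (t := B)]
    · rw [Finset.sum_congr rfl (g := fun _ => 2)]
      · simp [mul_comm]
      · intro w hw
        rw [← h2 w]
        congr 1
        ext t
        simp only [Finset.mem_filter, Finset.mem_univ, true_and]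
        constructor
        · exact fun h => h.2
        · rintro rfl
          exact ⟨hw, rfl⟩
    · intro t ht
      simpa using ht
  have hall := (Finset.all_card_le_biUnion_card_iff_exists_injective
    (fun w : W => (Finset.univ.filter (fun t => π t = w)).image (fun t => π (τ t)))).1 (by
      intro B
      have h1 := hc B
      have h3 := hc (B.biUnion fun w => (Finset.univ.filter (fun t => π t = w)).image
        (fun t => π (τ t)))
      have h4 : (Finset.univ.filter (fun t => π t ∈ B)).card ≤ (Finset.univ.filter (fun t => π t ∈
          (B.biUnion fun w => (Finset.univ.filter (fun t => π t = w)).image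
        (fun t => π (τ t))))).card := by
        apply Finset.card_le_card_of_injOn τ
        · intro t ht
          simp only [Finset.coe_filter, Finset.mem_univ, true_and, Set.mem_ofPred_eq] at ht
          simp only [Finset.coe_filter, Finset.mem_univ, true_and, Set.mem_ofPred_eq,
            Finset.mem_biUnion, Finset.mem_image, Finset.mem_filter]
          exact ⟨π t, ht, t, rfl, rfl⟩
        · exact hτ.injOn
      omega)
  obtain ⟨f, hf, hm⟩ := hall
  have hm' : ∀ w, ∃ t, π t = w ∧ π (τ t) = f w := by
    intro w
    simpa using hm w
  choose g hg1 hg2 using hm'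
  refine ⟨g, hg1, ?_⟩
  intro a b hab
  apply hf
  simpa [hg2] using hab

/-- The setoid of orbits of an involution. -/
def invSetoid {A : Type*} (μ : A → A) (hμ : ∀ a, μ (μ a) = a) : Setoid A where
  r a b := b = a ∨ b = μ a
  iseqv := ⟨fun a => Or.inl rfl, by
    rintro a b (rfl | rfl)
    · exact Or.inl rfl
    · exact Or.inr (hμ a).symm, by
    rintro a b c (rfl | rfl) (rfl | rfl)
    · exact Or.inl rfl
    · exact Or.inr rfl
    · exact Or.inr rfl
    · exact Or.inl (hμ a)⟩

theorem choice_lemma.{v} {A : Type v} [Finite A] (σ μ : A → A) (hσ : Function.Injective σ)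
    (hμ : ∀ a, μ (μ a) = a) :
    ∃ (W : Type v) (_ : Finite W) (c : A → W) (φ : W → W), Function.Injective φ ∧
      (∀ a b, c a = c b ↔ (b = a ∨ b = μ a)) ∧
      (∀ w, (∃ a, μ a = a ∧ c a = w ∧ φ w = w) ∨ ∃ a, c a = w ∧ φ w = c (σ a)) := by
  classical
  have := Fintype.ofFinite A
  let S := invSetoid μ hμ
  let W := Quotient S
  let c : A → W := fun a => Quotient.mk S a
  have hcc : ∀ a b, c a = c b ↔ (b = a ∨ b = μ a) := fun a b => Quotient.eq (r := S)
  let T := A ⊕ {a : A // μ a = a}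
  let π : T → W := Sum.elim c (fun a => c a.1)
  let τ : T → T := Sum.map σ id
  have hτ : Function.Injective τ := hσ.sumMap Function.injective_id
  obtain ⟨g, hg1, hg2⟩ := hall_two π τ hτ (by
    intro w
    induction w using Quotient.inductionOn with
    | h a =>
    change (Finset.univ.filter (fun t => π t = c a)).card = 2
    rw [Finset.card_eq_two]
    by_cases h : μ a = a
    · refine ⟨Sum.inl a, Sum.inr ⟨a, h⟩, by simp, ?_⟩
      ext t
      rcases t with b | ⟨b, hb⟩
      · simp only [Finset.mem_filter, Finset.mem_univ, true_and, π, Sum.elim_inl, hcc]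
        have := hμ b
        simp
        grind
      · simp only [Finset.mem_filter, Finset.mem_univ, true_and, π, Sum.elim_inr, hcc]
        simp
        grind
    · refine ⟨Sum.inl a, Sum.inl (μ a), fun h' => h (Sum.inl.inj h').symm, ?_⟩
      ext t
      rcases t with b | ⟨b, hb⟩
      · simp only [Finset.mem_filter, Finset.mem_univ, true_and, π, Sum.elim_inl, hcc]
        have := hμ b
        have := hμ a
        simp
        grind
      · simp only [Finset.mem_filter, Finset.mem_univ, true_and, π, Sum.elim_inr, hcc]
        simp
        grind)
  refine ⟨W, inferInstance, c, fun w => π (τ (g w)), hg2, hcc, ?_⟩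
  intro w
  have h1 := hg1 w
  rcases hgw : g w with a | a
  · right
    rw [hgw] at h1
    exact ⟨a, h1, by simp [hgw, τ, π]⟩
  · left
    rw [hgw] at h1
    exact ⟨a.1, a.2, h1, by simpa [hgw, τ, π] using h1⟩

theorem core_lemma {U : Type*} [Finite U] {k : ℕ}
    (σ : (Fin k × Bool) ⊕ U → (Fin k × Bool) ⊕ U) (hσ : Function.Injective σ)
    (hsrc : ∀ i, ∃ x, σ (Sum.inl i) = Sum.inr x)
    (μ : U → U) (hμ : ∀ u, μ (μ u) = u) :
    ∃ S : Fin k → Set U,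
      (∀ j, ∃ x y i i', σ (Sum.inl i) = Sum.inr x ∧ σ (Sum.inr y) = Sum.inl i' ∧ x ∈ S j ∧
        Relation.ReflTransGen (fun a b => a ∈ S j ∧ b ∈ S j ∧
          (σ (Sum.inr a) = Sum.inr b ∨ b = μ a)) x y) ∧
      (∀ j j', j ≠ j' → ∀ p ∈ S j, ∀ p' ∈ S j', p' ≠ p ∧ p' ≠ μ p ∧
        (σ (Sum.inr p) = Sum.inr p' → μ p ≠ p ∧ μ p' ≠ p')) := by
  classical
  let μ' : (Fin k × Bool) ⊕ U → (Fin k × Bool) ⊕ U :=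
    Sum.map (fun i => (i.1, !i.2)) μ
  have hμ' : ∀ a, μ' (μ' a) = a := by
    rintro (⟨j, b⟩ | u) <;> simp [μ', hμ]
  obtain ⟨W, hW, c, φ, hφ, hc, hstep⟩ := choice_lemma σ μ' hσ hμ'
  let s : Fin k → W := fun j => c (Sum.inl (j, false))
  have hs : ∀ j b, c (Sum.inl (j, b)) = s j := by
    intro j b
    simp only [s, hc, μ']
    cases b <;> simp
  have hsinj : Function.Injective s := by
    intro i j h
    simpa [s, hc, μ', eq_comm] using h
  have hne : ∀ j u, c (Sum.inr u) ≠ s j := by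
    intro j u h
    simp [s, hc, μ'] at h
  have hcU : ∀ u v, c (Sum.inr u) = c (Sum.inr v) ↔ (v = u ∨ v = μ u) := by
    intro u v
    simp [hc, μ']
  have hper : ∀ j, ∃ m, 0 < m ∧ ∃ i, φ^[m] (s j) = s i := by
    intro j
    have := hφ.mem_periodicPts (s j)
    obtain ⟨n, hn, h⟩ := this
    exact ⟨n, hn, j, h⟩
  let m : Fin k → ℕ := fun j => Nat.find (hper j)
  have hm0 : ∀ j, 0 < m j := fun j => (Nat.find_spec (hper j)).1
  have hm1 : ∀ j, ∃ i, φ^[m j] (s j) = s i := fun j => (Nat.find_spec (hper j)).2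
  have hmin : ∀ j a i, 0 < a → a < m j → φ^[a] (s j) ≠ s i := by
    intro j a i h0 h1 h2
    exact Nat.find_min (hper j) h1 ⟨h0, i, h2⟩
  have hdis' : ∀ j j' a b, a ≤ b → b < m j' → φ^[a] (s j) = φ^[b] (s j') → j = j' := by
    intro j j' a b hab hb h
    obtain ⟨d, rfl⟩ := Nat.exists_eq_add_of_le hab
    rw [Function.iterate_add_apply] at h
    have h := (hφ.iterate a) h
    rcases Nat.eq_zero_or_pos d with rfl | hd
    · exact hsinj h
    · exact absurd h.symm (hmin j' d j hd (by omega))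
  have hdis : ∀ j j' a b, a < m j → b < m j' → φ^[a] (s j) = φ^[b] (s j') → j = j' := by
    intro j j' a b ha hb h
    rcases le_total a b with hab | hab
    · exact hdis' j j' a b hab hb h
    · exact (hdis' j' j b a hab ha h.symm).symm
  -- step out of a source
  have hfirst : ∀ j, ∃ i x, σ (Sum.inl i) = Sum.inr x ∧ φ (s j) = c (Sum.inr x) := by
    intro j
    rcases hstep (s j) with ⟨a, ha, hca, -⟩ | ⟨a, hca, h⟩
    · rcases a with ⟨i, b⟩ | u
      · simp [μ'] at ha
      · exact absurd hca (hne j u)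
    · rcases a with i | u
      · obtain ⟨x, hx⟩ := hsrc i
        exact ⟨i, x, hx, by rw [h, hx]⟩
      · exact absurd hca (hne j u)
  have hnofix : ∀ j a, φ (φ^[a] (s j)) ≠ φ^[a] (s j) := by
    intro j a h
    rw [← Function.iterate_succ_apply' φ, Function.iterate_succ_apply] at h
    have h := (hφ.iterate a) h
    obtain ⟨i, x, hx, h'⟩ := hfirst j
    exact hne j x (h'.symm.trans h)
  have hex : ∀ w, ∃ a, φ w ≠ w → c a = w ∧ φ w = c (σ a) := by
    intro w
    rcases hstep w with ⟨a, ha, hca, h⟩ | ⟨a, hca, h⟩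
    · exact ⟨a, fun h' => absurd h h'⟩
    · exact ⟨a, fun _ => ⟨hca, h⟩⟩
  choose ex hex using hex
  let S : Fin k → Set U := fun j => {p | (∃ a, 0 < a ∧ a < m j ∧ φ^[a] (s j) = c (Sum.inr p)) ∧
    (ex (c (Sum.inr p)) = Sum.inr p ∨ ∃ w, φ w ≠ w ∧ σ (ex w) = Sum.inr p)}
  have hcl : ∀ j j', j ≠ j' → ∀ p ∈ S j, ∀ p' ∈ S j', c (Sum.inr p) ≠ c (Sum.inr p') := by
    rintro j j' hj p ⟨⟨a, ha0, ha, h⟩, -⟩ p' ⟨⟨b, hb0, hb, h'⟩, -⟩ hh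
    exact hj (hdis j j' a b ha hb (by rw [h, h', hh]))
  refine ⟨S, ?_, ?_⟩
  · intro j
    -- entry at the source
    have hs0 := hex (s j) (by simpa using hnofix j 0)
    obtain ⟨i, hi⟩ : ∃ i, ex (s j) = Sum.inl i := by
      rcases hh : ex (s j) with i | u
      · exact ⟨i, rfl⟩
      · rw [hh] at hs0
        exact absurd hs0.1 (hne j u)
    rw [hi] at hs0
    obtain ⟨x, hx⟩ := hsrc i
    rw [hx] at hs0
    have h1m : 1 < m j := by
      rcases Nat.lt_or_ge 1 (m j) with h | h
      · exact h
      · have h1 : m j = 1 := le_antisymm h (hm0 j)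
        obtain ⟨i', hi'⟩ := hm1 j
        rw [h1] at hi'
        exact absurd (hs0.2.symm.trans hi') (hne i' x)
    have hxS : x ∈ S j := ⟨⟨1, one_pos, h1m, hs0.2⟩, Or.inr ⟨s j, by simpa using hnofix j 0,
      by rw [hi, hx]⟩⟩
    have hexit : ∀ a, 0 < a → a < m j → ∀ u ∈ S j, φ^[a] (s j) = c (Sum.inr u) →
        ∃ v ∈ S j, ex (φ^[a] (s j)) = Sum.inr v ∧ φ^[a+1] (s j) = c (σ (Sum.inr v)) ∧
        Relation.ReflTransGen (fun a b => a ∈ S j ∧ b ∈ S j ∧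
          (σ (Sum.inr a) = Sum.inr b ∨ b = μ a)) u v := by
      intro a ha0 ha u hu huc
      obtain ⟨h1, h2⟩ := hex _ (hnofix j a)
      rcases hh : ex (φ^[a] (s j)) with i | v
      · rw [hh, hs i.1 i.2] at h1
        exact absurd h1.symm (hmin j a i.1 ha0 ha)
      · rw [hh] at h1 h2
        have hvS : v ∈ S j := ⟨⟨a, ha0, ha, h1.symm⟩, Or.inl (by rw [h1, hh])⟩
        refine ⟨v, hvS, rfl, by rw [Function.iterate_succ_apply', h2], ?_⟩
        rcases (hcU u v).1 (huc.symm.trans h1.symm) with rfl | h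
        · exact Relation.ReflTransGen.refl
        · exact Relation.ReflTransGen.single ⟨hu, hvS, Or.inr h⟩
    have hreach : ∀ a, 0 < a → a < m j → ∃ u ∈ S j, φ^[a] (s j) = c (Sum.inr u) ∧
        Relation.ReflTransGen (fun a b => a ∈ S j ∧ b ∈ S j ∧
          (σ (Sum.inr a) = Sum.inr b ∨ b = μ a)) x u := by
      intro a ha0
      induction a, ha0 using Nat.le_induction with
      | base => exact fun _ => ⟨x, hxS, hs0.2, Relation.ReflTransGen.refl⟩
      | succ a ha0 ih =>
        intro ha
        obtain ⟨u, huS, huc, hr⟩ := ih (by omega)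
        obtain ⟨v, hvS, hev, hvc, hr'⟩ := hexit a ha0 (by omega) u huS huc
        rcases hv : σ (Sum.inr v) with i | u'
        · rw [hv, hs i.1 i.2] at hvc
          exact absurd hvc (hmin j (a+1) i.1 (by omega) ha)
        · rw [hv] at hvc
          have hu'S : u' ∈ S j := ⟨⟨a+1, by omega, ha, hvc⟩,
            Or.inr ⟨_, hnofix j a, by rw [hev, hv]⟩⟩
          exact ⟨u', hu'S, hvc, (hr.trans hr').tail ⟨hvS, hu'S, Or.inl hv⟩⟩
    obtain ⟨u, huS, huc, hr⟩ := hreach (m j - 1) (by omega) (by omega)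
    obtain ⟨v, hvS, hev, hvc, hr'⟩ := hexit (m j - 1) (by omega) (by omega) u huS huc
    rw [Nat.sub_add_cancel (by omega)] at hvc
    obtain ⟨i0, hi0⟩ := hm1 j
    rcases hv : σ (Sum.inr v) with i' | u'
    · exact ⟨x, v, i, i', hx, hv, hxS, hr.trans hr'⟩
    · rw [hv] at hvc
      exact absurd (hvc.symm.trans hi0) (hne i0 u')
  · intro j j' hj p hp p' hp'
    have hcl' := hcl j j' hj p hp p' hp'
    refine ⟨?_, ?_, ?_⟩
    · rintro rfl
      exact hcl' rfl
    · intro h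
      exact hcl' ((hcU p p').2 (Or.inr h))
    · intro hpp
      obtain ⟨⟨a, ha0, ha, hac⟩, hp2⟩ := hp
      obtain ⟨⟨b, hb0, hb, hbc⟩, hp2'⟩ := hp'
      have hnot : ex (c (Sum.inr p)) ≠ Sum.inr p := by
        intro he
        have h1 := (hex _ (hnofix j a)).2
        rw [hac, he, hpp] at h1
        rw [← hac, ← Function.iterate_succ_apply' φ] at h1
        have h2 : a + 1 < m j := by
          rcases Nat.lt_or_ge (a+1) (m j) with h | h
          · exact h
          · have h3 : a + 1 = m j := by omega
            obtain ⟨i', hi'⟩ := hm1 j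
            rw [← h3] at hi'
            exact absurd (h1.symm.trans hi') (hne i' p')
        exact hj (hdis j j' (a+1) b h2 hb (h1.trans hbc.symm))
      constructor
      · intro hfix
        have h1 := (hex _ (hnofix j a)).1
        rw [hac] at h1
        rcases hh : ex (c (Sum.inr p)) with i | v
        · rw [hh, hs i.1 i.2] at h1
          exact hne _ _ h1.symm
        · rw [hh] at h1
          rcases (hcU _ _).1 h1.symm with h | h
          · exact hnot (by rw [hh, h])
          · exact hnot (by rw [hh, h, hfix])
      · intro hfix
        obtain ⟨d, rfl⟩ : ∃ d, b = d + 1 := ⟨b - 1, by omega⟩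
        have h0 := hnofix j' d
        obtain ⟨h1, h2⟩ := hex _ h0
        rw [← Function.iterate_succ_apply' φ, hbc] at h2
        have hent : σ (ex (φ^[d] (s j'))) = Sum.inr p' := by
          rcases hh : σ (ex (φ^[d] (s j'))) with i | v
          · rw [hh, hs i.1 i.2] at h2
            exact absurd h2 (hne _ _)
          · rw [hh] at h2
            rcases (hcU _ _).1 h2 with h | h
            · rw [h]
            · rw [h, hfix]
        have hexp := hσ (hent.trans hpp.symm)
        rw [hexp] at h1
        exact hnot (by rw [h1, hexp])

end helpers

section graph

/-- Chordless walks. -/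
def Chordless {G : SimpleGraph V} {x y : V} (p : G.Walk x y) : Prop :=
  ∀ s t, s < t → t ≤ p.length → G.Adj (p.getVert s) (p.getVert t) → t = s + 1

theorem exists_chordless (G : SimpleGraph V) (S : Set V) (x y : V) (hx : x ∈ S)
    (h : Relation.ReflTransGen (fun a b => b ∈ S ∧ G.Adj a b) x y) :
    ∃ p : G.Walk x y, p.IsPath ∧ (∀ v ∈ p.support, v ∈ S) ∧ Chordless p := by
  classical
  have hex : ∃ n, ∃ p : G.Walk x y, (∀ v ∈ p.support, v ∈ S) ∧ p.length = n := by
    induction h with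
    | refl => exact ⟨_, Walk.nil, by simpa using hx, rfl⟩
    | tail _ hbc ih =>
      obtain ⟨n, p, hp, -⟩ := ih
      refine ⟨_, p.concat hbc.2, ?_, rfl⟩
      intro v hv
      rw [Walk.support_concat] at hv
      simp only [List.concat_eq_append, List.mem_append, List.mem_singleton] at hv
      rcases hv with hv | rfl
      · exact hp v hv
      · exact hbc.1
  obtain ⟨q, hqS, hq⟩ := Nat.find_spec hex
  have hmin : ∀ p : G.Walk x y, (∀ v ∈ p.support, v ∈ S) → q.bypass.length ≤ p.length := by
    intro p hp
    refine (Walk.length_bypass_le_length q).trans ?_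
    rw [hq]
    exact Nat.find_min' hex ⟨p, hp, rfl⟩
  refine ⟨q.bypass, Walk.bypass_isPath q, fun v hv => hqS v (Walk.support_bypass_subset_support q hv), ?_⟩
  intro s t hst ht hadj
  have h1 := hmin ((q.bypass.take s).append (Walk.cons hadj (q.bypass.drop t))) (by
    intro v hv
    apply hqS v
    apply Walk.support_bypass_subset_support q
    rw [Walk.mem_support_append_iff] at hv
    rcases hv with hv | hv
    · exact (Walk.isSubwalk_take q.bypass s).support_subset hv
    · rw [Walk.support_cons, List.mem_cons] at hv
      rcases hv with rfl | hv
      · exact Walk.getVert_mem_support _ _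
      · exact (Walk.isSubwalk_drop q.bypass t).support_subset hv)
  rw [Walk.length_append, Walk.length_cons, Walk.take_length, Walk.drop_length] at h1
  omega

/-- Families of chordless `X`-`Y`-paths, disjoint, with no edge of `D` across. -/
structure GoodFam (G : SimpleGraph V) (X Y : Set V) (D : Set (Sym2 V)) {ι : Type*}
    (P : ι → PathPkg G) : Prop where
  xy : ∀ i, IsXYPath G X Y (P i)
  cl : ∀ i, Chordless (P i).2.2
  dj : ∀ i j, i ≠ j → ∀ a ∈ pkgSupport (P i), ∀ b ∈ pkgSupport (P j), a ≠ b ∧ s(a, b) ∉ D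

theorem good_step_s1 (G : SimpleGraph V) (X Y : Set V) (D M : Set (Sym2 V)) (k : ℕ)
    (hM : IsInducedMatching G M)
    (P : Fin k × Bool → PathPkg G) (hP : GoodFam G X Y D P) (hDG : D ⊆ G.edgeSet) :
    ∃ Q : Fin k → PathPkg G, GoodFam G X Y (D ∪ M) Q := by
  classical
  let U := Σ i : Fin k × Bool, Fin ((P i).2.2.length + 1)
  let val : U → V := fun u => (P u.1).2.2.getVert u.2
  have hmem : ∀ u : U, val u ∈ pkgSupport (P u.1) := fun u => Walk.getVert_mem_support _ _
  have hval : Function.Injective val := by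
    rintro ⟨i, t⟩ ⟨i', t'⟩ h
    by_cases hi : i = i'
    · subst hi
      have := (hP.xy i).1.getVert_injOn (show (t : ℕ) ≤ _ by omega) (show (t' : ℕ) ≤ _ by omega) h
      rw [Fin.ext this]
    · exact absurd h (hP.dj i i' hi _ (hmem ⟨i, t⟩) _ (hmem ⟨i', t'⟩)).1
  let σ : (Fin k × Bool) ⊕ U → (Fin k × Bool) ⊕ U := Sum.elim (fun i => Sum.inr ⟨i, 0⟩)
    (fun u => if h : (u.2 : ℕ) + 1 < (P u.1).2.2.length + 1 then
      Sum.inr ⟨u.1, ⟨u.2 + 1, h⟩⟩ else Sum.inl u.1)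
  have hσr : ∀ u v : U, σ (Sum.inr u) = Sum.inr v ↔ (v.1 = u.1 ∧ (v.2 : ℕ) = u.2 + 1) := by
    rintro ⟨i, t, ht⟩ ⟨i', t', ht'⟩
    simp only [σ, Sum.elim_inr]
    split_ifs with h
    · simp only [Sum.inr.injEq]
      constructor
      · intro h
        cases h
        exact ⟨rfl, rfl⟩
      · rintro ⟨h1, h2⟩
        try dsimp at h1 h2
        subst h1
        subst h2
        rfl
    · simp only [reduceCtorEq, false_iff]
      rintro ⟨h1, h2⟩
      try dsimp at h1 h2 h
      subst h1
      omega
  have hσl : ∀ (u : U) i, σ (Sum.inr u) = Sum.inl i ↔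
      (i = u.1 ∧ (u.2 : ℕ) = (P u.1).2.2.length) := by
    rintro ⟨i, t, ht⟩ i'
    simp only [σ, Sum.elim_inr]
    split_ifs with h
    · simp
      try dsimp at h
      intro _
      omega
    · simp only [Sum.inl.injEq]
      try dsimp at h ⊢
      constructor
      · rintro rfl
        exact ⟨rfl, by omega⟩
      · exact fun h => h.1.symm
  have hσs : ∀ i, σ (Sum.inl i) = Sum.inr ⟨i, 0⟩ := fun i => rfl
  have hσ : Function.Injective σ := by
    rintro (i | ⟨i, t⟩) (i' | ⟨i', t'⟩) h
    · rw [hσs, hσs] at h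
      cases h
      rfl
    · rw [hσs, eq_comm, hσr] at h
      simp at h
    · rw [hσs, hσr] at h
      simp at h
    · rcases h2 : σ (Sum.inr ⟨i', t'⟩) with j | ⟨j, r⟩
      · rw [h2, hσl] at h
        rw [hσl] at h2
        obtain ⟨rfl, h3⟩ := h
        obtain ⟨h4, h5⟩ := h2
        dsimp at h3 h4 h5
        subst h4
        rw [Fin.ext (h3.trans h5.symm)]
      · rw [h2, hσr] at h
        rw [hσr] at h2
        obtain ⟨h1, h3⟩ := h
        obtain ⟨h4, h5⟩ := h2
        dsimp at h1 h3 h4 h5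
        subst h1
        subst h4
        have : (t : ℕ) = t' := by omega
        rw [Fin.ext this]
  -- the partner map
  let R : U → U → Prop := fun u v => u.1 ≠ v.1 ∧ s(val u, val v) ∈ M
  have hRs : ∀ u v, R u v → R v u := by
    rintro u v ⟨h1, h2⟩
    exact ⟨h1.symm, by rwa [Sym2.eq_swap]⟩
  have hRu : ∀ u v w, R u v → R u w → v = w := by
    rintro u v w ⟨_, h1⟩ ⟨_, h2⟩
    by_contra hvw
    refine (hM.2 _ h1 _ h2 ?_ (val u) (by simp) (val u) (by simp)).1 rfl
    intro h
    rw [Sym2.congr_right] at h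
    exact hvw (hval h)
  let μ : U → U := fun u => if h : ∃ v, R u v then h.choose else u
  have hμR : ∀ u v, R u v → μ u = v := by
    intro u v h
    have h' : ∃ v, R u v := ⟨v, h⟩
    simp only [μ, dif_pos h']
    exact hRu u _ _ h'.choose_spec h
  have hμne : ∀ u, μ u ≠ u → R u (μ u) := by
    intro u h
    by_cases h' : ∃ v, R u v
    · obtain ⟨v, hv⟩ := h'
      rwa [hμR u v hv]
    · exact absurd (by simp only [μ, dif_neg h']) h
  have hμ : ∀ u, μ (μ u) = u := by
    intro u
    by_cases h : μ u = u
    · rw [h, h]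
    · exact hμR _ _ (hRs _ _ (hμne u h))
  obtain ⟨S, hS1, hS2⟩ := core_lemma σ hσ (fun i => ⟨_, hσs i⟩) μ hμ
  have hQ : ∀ j, ∃ q : PathPkg G, IsXYPath G X Y q ∧ Chordless q.2.2 ∧
      ∀ v ∈ pkgSupport q, ∃ u ∈ S j, val u = v := by
    intro j
    obtain ⟨x, y, i, i', hx, hy, hxS, hr⟩ := hS1 j
    have hr' : Relation.ReflTransGen (fun a b => b ∈ val '' S j ∧ G.Adj a b) (val x) (val y) := by
      clear hy
      induction hr with
      | refl => exact Relation.ReflTransGen.refl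
      | @tail b c _ hbc ih =>
        obtain ⟨hb, hc, h | h⟩ := hbc
        · refine ih.tail ⟨⟨c, hc, rfl⟩, ?_⟩
          rw [hσr] at h
          obtain ⟨b1, b2⟩ := b
          obtain ⟨c1, c2⟩ := c
          dsimp at h
          obtain ⟨rfl, h⟩ := h
          simp only [val, h]
          exact Walk.adj_getVert_succ _ (by omega)
        · by_cases h' : c = b
          · rwa [h']
          · refine ih.tail ⟨⟨c, hc, rfl⟩, ?_⟩
            have := (hμne b (by rwa [← h])).2
            rw [← h] at this
            exact hM.1 this
    obtain ⟨p, hp, hpS, hpc⟩ := exists_chordless G (val '' S j) _ _ ⟨x, hxS, rfl⟩ hr'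
    refine ⟨⟨_, _, p⟩, ⟨hp, ?_, ?_⟩, hpc, hpS⟩
    · rw [hσs] at hx
      cases hx
      simpa [val] using (hP.xy i).2.1
    · rw [hσl] at hy
      simpa [val, hy.2] using (hP.xy y.1).2.2
  choose Q hQ1 hQ2 hQ3 using hQ
  -- consecutive vertices never lie in distinct new paths
  have hcons : ∀ j j', j ≠ j' → ∀ u ∈ S j, ∀ v ∈ S j', σ (Sum.inr u) ≠ Sum.inr v := by
    intro j j' hj u hu v hv h
    obtain ⟨h1, h2, h3⟩ := hS2 j j' hj u hu v hv
    obtain ⟨h4, h5⟩ := h3 h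
    have hu' := (hμne u h4).2
    have hv' := (hμne v h5).2
    refine (hM.2 _ hu' _ hv' ?_ (val u) (by simp) (val v) (by simp)).2 ?_
    · intro he
      rw [Sym2.eq_iff] at he
      rcases he with he | he
      · exact h1 (hval he.1).symm
      · exact h2 (hval he.2).symm
    · rw [hσr] at h
      obtain ⟨b1, b2⟩ := u
      obtain ⟨c1, c2⟩ := v
      dsimp at h
      obtain ⟨rfl, h⟩ := h
      simp only [val, h]
      exact Walk.adj_getVert_succ _ (by omega)
  refine ⟨Q, hQ1, hQ2, ?_⟩
  intro j j' hj a ha b hb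
  obtain ⟨u, hu, rfl⟩ := hQ3 j a ha
  obtain ⟨v, hv, rfl⟩ := hQ3 j' b hb
  obtain ⟨h1, h2, -⟩ := hS2 j j' hj u hu v hv
  refine ⟨fun h => h1 (hval h).symm, ?_⟩
  intro hD
  have hadj : G.Adj (val u) (val v) := by
    rcases hD with hD | hD
    · exact hDG hD
    · exact hM.1 hD
  by_cases huv : u.1 = v.1
  · have hc1 := hcons j j' hj u hu v hv
    have hc2 := hcons j' j hj.symm v hv u hu
    rw [Ne, hσr] at hc1 hc2
    obtain ⟨i, t⟩ := u
    obtain ⟨i', t'⟩ := v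
    dsimp at huv
    subst huv
    rcases lt_trichotomy (t : ℕ) t' with h | h | h
    · exact hc1 ⟨rfl, hP.cl i _ _ h (Nat.le_of_lt_succ t'.isLt) hadj⟩
    · exact h1 (by rw [Fin.ext h])
    · exact hc2 ⟨rfl, hP.cl i _ _ h (Nat.le_of_lt_succ t.isLt) hadj.symm⟩
  · rcases hD with hD | hD
    · exact (hP.dj _ _ huv _ (hmem u) _ (hmem v)).2 hD
    · exact h2 (hμR u v ⟨huv, hD⟩).symm

theorem good_iter (G : SimpleGraph V) (X Y : Set V) (k s : ℕ) :
    ∀ (D : Set (Sym2 V)) (_ : D ⊆ G.edgeSet) (M : Fin s → Set (Sym2 V))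
    (_ : ∀ i, IsInducedMatching G (M i))
    (P : Fin (2 ^ s * k) → PathPkg G) (_ : GoodFam G X Y D P),
    ∃ Q : Fin k → PathPkg G, GoodFam G X Y (D ∪ ⋃ i, M i) Q := by
  induction s with
  | zero =>
    intro D _ M _ P hP
    have e : Fin k ≃ Fin (2 ^ 0 * k) := Fintype.equivOfCardEq (by simp)
    refine ⟨P ∘ e, fun i => hP.xy _, fun i => hP.cl _, fun i j hij a ha b hb => ?_⟩
    have := hP.dj (e i) (e j) (e.injective.ne hij) a ha b hb
    simpa using this
  | succ s ih =>
    intro D hD M hM P hP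
    have e : Fin (2 ^ s * k) × Bool ≃ Fin (2 ^ (s + 1) * k) :=
      Fintype.equivOfCardEq (by simp; ring)
    obtain ⟨Q, hQ⟩ := good_step_s1 G X Y D (M 0) _ (hM 0) (P ∘ e)
      ⟨fun i => hP.xy _, fun i => hP.cl _, fun i j hij => hP.dj _ _ (e.injective.ne hij)⟩ hD
    obtain ⟨Q', hQ'⟩ := ih (D ∪ M 0) (Set.union_subset hD (hM 0).1) (fun i => M i.succ)
      (fun i => hM _) Q hQ
    refine ⟨Q', hQ'.xy, hQ'.cl, fun i j hij a ha b hb => ?_⟩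
    refine ⟨(hQ'.dj i j hij a ha b hb).1, fun h => (hQ'.dj i j hij a ha b hb).2 ?_⟩
    rcases h with h | h
    · exact Or.inl (Or.inl h)
    · obtain ⟨l, hl⟩ := Set.mem_iUnion.1 h
      rcases Fin.eq_zero_or_eq_succ l with rfl | ⟨l', rfl⟩
      · exact Or.inl (Or.inr hl)
      · exact Or.inr (Set.mem_iUnion.2 ⟨l', hl⟩)

end graph

theorem statement_1 (G : SimpleGraph V) (X Y : Set V) (k : ℕ)
    (hχ : ∃ n, HasStrongEdgeColoring G n)
    (P : Fin (2 ^ strongChromaticIndex G * k) → PathPkg G)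
    (hP : ∀ i, IsXYPath G X Y (P i))
    (hdisj : Pairwise fun i j => PkgDisjoint (P i) (P j)) :
    ∃ Q : Fin k → PathPkg G,
      (∀ i, IsXYPath G X Y (Q i)) ∧
      Pairwise fun i j => PkgNonAdj G (Q i) (Q j) := by
  obtain ⟨M, hM, -, hU⟩ : HasStrongEdgeColoring G (strongChromaticIndex G) := Nat.sInf_mem hχ
  have hc : ∀ i, ∃ q : PathPkg G, IsXYPath G X Y q ∧ Chordless q.2.2 ∧
      ∀ v ∈ pkgSupport q, v ∈ pkgSupport (P i) := by
    intro i
    have hw : ∀ {x y : V} (p : G.Walk x y),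
        Relation.ReflTransGen (fun a b => b ∈ {v | v ∈ p.support} ∧ G.Adj a b) x y := by
      intro x y p
      induction p with
      | nil => exact Relation.ReflTransGen.refl
      | cons h p ih =>
        refine Relation.ReflTransGen.head ⟨by simp, h⟩ ?_
        refine Relation.ReflTransGen.mono ?_ _ _ ih
        rintro a b ⟨h1, h2⟩
        exact ⟨List.mem_cons_of_mem _ h1, h2⟩
    obtain ⟨q, hq, hqS, hqc⟩ := exists_chordless G (pkgSupport (P i)) _ _
      (Walk.start_mem_support _) (hw (P i).2.2)
    exact ⟨⟨_, _, q⟩, ⟨hq, (hP i).2⟩, hqc, hqS⟩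
  choose P' h1 h2 h3 using hc
  obtain ⟨Q, hQ⟩ := good_iter G X Y k _ ∅ (Set.empty_subset _) M hM P' ⟨h1, h2,
    fun i j hij a ha b hb => ⟨by
      rintro rfl
      exact hdisj hij a (h3 i a ha) (h3 j a hb), by simp⟩⟩
  refine ⟨Q, hQ.xy, fun i j hij a ha b hb => ⟨(hQ.dj i j hij a ha b hb).1, fun h => ?_⟩⟩
  refine (hQ.dj i j hij a ha b hb).2 (Or.inr ?_)
  rw [hU]
  exact h
end

section
/- Let m and k be natural numbers, let G be a simple graph, let X, Y ⊆ V(G), let 𝒫 be a collection of 2^m·k pairwise disjoint X-Y-paths in G, and suppose the set of edges of the induced subgraph G[V(𝒫)] that do not lie on any path of 𝒫 can be partitioned into m induced matchings of G. Then G contains k pairwise non-adjacent X-Y-paths. -/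
open SimpleGraph

universe u

variable {V : Type u}

open Finset in
theorem hall_perm {N W : Type*} [Fintype N] [Fintype W] [DecidableEq W] (π : N → W)
    (τ : Equiv.Perm N) (h : ∀ w, #{a | π a = w} ≤ 2) :
    ∃ σ : Equiv.Perm W, ∀ w, (∃ a, π a = w ∧ π (τ a) = σ w) ∨
      (σ w = w ∧ #{a | π a = w} ≤ 1) := by
  classical
  let A : W → W → ℕ := fun w w' => #{a | π a = w ∧ π (τ a) = w'} +
    if w = w' then 2 - #{a | π a = w} else 0
  have row : ∀ w, ∑ w', A w w' = 2 := by
    intro w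
    have h1 : #{a | π a = w} = ∑ w', #{a | π a = w ∧ π (τ a) = w'} := by
      rw [Finset.card_eq_sum_card_fiberwise (f := fun a => π (τ a)) (t := univ) (by simp)]
      simp [Finset.filter_filter]
    have := h w
    simp only [A, Finset.sum_add_distrib, ← h1, Finset.sum_ite_eq, Finset.mem_univ, if_true]
    omega
  have col : ∀ w', ∑ w, A w w' = 2 := by
    intro w'
    have h0 : #{a | π a = w'} = #{a | π (τ a) = w'} := by
      symm
      apply Finset.card_bij (fun a _ => τ a)
      · simp
      · simp
      · intro b hb; exact ⟨τ.symm b, by simpa using hb, by simp⟩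
    have h1 : #{a | π (τ a) = w'} = ∑ w, #{a | π a = w ∧ π (τ a) = w'} := by
      rw [Finset.card_eq_sum_card_fiberwise (f := fun a => π a) (t := univ) (by simp)]
      simp [Finset.filter_filter, and_comm]
    have := h w'
    simp only [A, Finset.sum_add_distrib, ← h1, Finset.sum_ite_eq', Finset.mem_univ, if_true]
    omega
  have hall := (Finset.all_card_le_biUnion_card_iff_exists_injective
    (fun w : W => ({w' | A w w' ≠ 0} : Finset W))).1 (by
      intro S
      set T := S.biUnion (fun w : W => ({w' | A w w' ≠ 0} : Finset W)) with hT
      have e1 : ∑ w ∈ S, ∑ w', A w w' = ∑ w ∈ S, ∑ w' ∈ T, A w w' := by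
        apply Finset.sum_congr rfl
        intro w hw
        symm
        apply Finset.sum_subset (Finset.subset_univ _)
        intro w' _ hw'
        by_contra hne
        exact hw' (Finset.mem_biUnion.2 ⟨w, hw, by simpa using hne⟩)
      have e2 : ∑ w ∈ S, ∑ w' ∈ T, A w w' ≤ ∑ w' ∈ T, ∑ w, A w w' := by
        rw [Finset.sum_comm]
        apply Finset.sum_le_sum
        intro w' _
        exact Finset.sum_le_sum_of_subset (Finset.subset_univ _)
      simp only [row, col, Finset.sum_const, smul_eq_mul] at e1 e2
      omega)
  obtain ⟨f, hf, hft⟩ := hall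
  refine ⟨Equiv.ofBijective f (Finite.injective_iff_bijective.1 hf), fun w => ?_⟩
  have := hft w
  simp only [Finset.mem_filter, Finset.mem_univ, true_and, A] at this
  simp only [Equiv.ofBijective_apply]
  by_cases hc : #{a | π a = w ∧ π (τ a) = f w} = 0
  · right
    rw [hc] at this
    split_ifs at this with h2
    · exact ⟨h2.symm, by omega⟩
    · simp at this
  · left
    obtain ⟨a, ha⟩ := Finset.card_pos.1 (Nat.pos_of_ne_zero hc)
    exact ⟨a, by simpa using ha⟩

theorem exists_induced_path {V : Type*} (H : SimpleGraph V) {s t : V} (h : H.Reachable s t) :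
    ∃ p : H.Walk s t, p.IsPath ∧ ∀ u ∈ p.support, ∀ v ∈ p.support, H.Adj u v →
      s(u, v) ∈ p.edges := by
  obtain ⟨p, hp⟩ := h.exists_walk_length_eq_dist
  refine ⟨p, p.isPath_of_length_eq_dist hp, ?_⟩
  have key : ∀ i j, i ≤ p.length → j ≤ p.length → i < j → H.Adj (p.getVert i) (p.getVert j) →
      s(p.getVert i, p.getVert j) ∈ p.edges := by
    intro i j hi hj hij hadj
    have h1 : j = i + 1 := by
      by_contra hne
      have := SimpleGraph.dist_le (((p.take i).concat hadj).append (p.drop j))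
      simp [SimpleGraph.Walk.length_append, SimpleGraph.Walk.take_length, SimpleGraph.Walk.drop_length] at this
      omega
    subst h1
    have hlt : i < p.edges.length := by rw [SimpleGraph.Walk.length_edges]; omega
    have := List.getElem_mem hlt
    rwa [SimpleGraph.Walk.getElem_edges] at this
  intro u hu v hv hadj
  obtain ⟨i, rfl, hi⟩ := SimpleGraph.Walk.mem_support_iff_exists_getVert.1 hu
  obtain ⟨j, rfl, hj⟩ := SimpleGraph.Walk.mem_support_iff_exists_getVert.1 hv
  rcases lt_trichotomy i j with h | h | h
  · exact key i j hi hj h hadj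
  · subst h; exact absurd hadj (H.loopless.irrefl _)
  · rw [Sym2.eq_swap]; exact key j i hj hi h hadj.symm

theorem tau_exists {G : SimpleGraph V} {J : Type*} (P : J → PathPkg G)
    (hP : ∀ j, (P j).2.2.IsPath) (hdisj : Pairwise fun i j => PkgDisjoint (P i) (P j)) :
    ∃ τ : Equiv.Perm (J ⊕ {v : V // ∃ j, v ∈ pkgSupport (P j)}),
      (∀ j, ∃ u, τ (Sum.inl j) = Sum.inr u ∧ u.1 = (P j).1) ∧
      (∀ u j, τ (Sum.inr u) = Sum.inl j → u.1 = (P j).2.1) ∧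
      (∀ u v, τ (Sum.inr u) = Sum.inr v → ∃ j, s(u.1, v.1) ∈ pkgEdges (P j)) ∧
      (∀ u v : {v : V // ∃ j, v ∈ pkgSupport (P j)}, ∀ j, s(u.1, v.1) ∈ pkgEdges (P j) →
        τ (Sum.inr u) = Sum.inr v ∨ τ (Sum.inr v) = Sum.inr u) := by
  classical
  let U := {v : V // ∃ j, v ∈ pkgSupport (P j)}
  let len : J → ℕ := fun j => (P j).2.2.length
  let N := Σ j, Fin (len j + 2)
  let vt : (j : J) → ℕ → U := fun j l =>
    ⟨(P j).2.2.getVert l, j, (P j).2.2.getVert_mem_support l⟩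
  let f : N → J ⊕ U := fun x => if x.2.1 = 0 then Sum.inl x.1 else Sum.inr (vt x.1 (x.2.1 - 1))
  have vt_inj : ∀ j j' l l', l ≤ len j → l' ≤ len j' → vt j l = vt j' l' → j = j' ∧ l = l' := by
    intro j j' l l' hl hl' h
    have h1 : (P j).2.2.getVert l = (P j').2.2.getVert l' := congrArg Subtype.val h
    by_cases hj : j = j'
    · subst hj
      exact ⟨rfl, (hP j).getVert_injOn hl hl' h1⟩
    · exfalso
      refine hdisj hj _ ((P j).2.2.getVert_mem_support l) ?_
      rw [h1]
      exact (P j').2.2.getVert_mem_support l'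
  have vt_surj : ∀ u : U, ∃ j l, l ≤ len j ∧ vt j l = u := by
    rintro ⟨v, j, hv⟩
    obtain ⟨l, h1, h2⟩ := SimpleGraph.Walk.mem_support_iff_exists_getVert.1 hv
    exact ⟨j, l, h2, Subtype.ext h1⟩
  have f0 : ∀ j (h : 0 < len j + 2), f ⟨j, ⟨0, h⟩⟩ = Sum.inl j := fun j h => by simp [f]
  have f1 : ∀ j l (h : l + 1 < len j + 2), f ⟨j, ⟨l + 1, h⟩⟩ = Sum.inr (vt j l) :=
    fun j l h => by simp [f]
  have fbij : Function.Bijective f := by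
    constructor
    · rintro ⟨j, ⟨l, hl⟩⟩ ⟨j', ⟨l', hl'⟩⟩ h
      rcases l with _ | l <;> rcases l' with _ | l'
      · rw [f0, f0] at h; cases h; rfl
      · rw [f0, f1] at h; cases h
      · rw [f0, f1] at h; cases h
      · rw [f1, f1] at h
        obtain ⟨rfl, rfl⟩ := vt_inj _ _ _ _ (by omega) (by omega) (Sum.inr_injective h)
        rfl
    · rintro (j | u)
      · exact ⟨⟨j, ⟨0, by omega⟩⟩, f0 _ _⟩
      · obtain ⟨j, l, hl, rfl⟩ := vt_surj u
        exact ⟨⟨j, ⟨l + 1, by omega⟩⟩, f1 _ _ _⟩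
  let e : N ≃ J ⊕ U := Equiv.ofBijective f fbij
  let rot : Equiv.Perm N := Equiv.sigmaCongrRight fun j => finRotate (len j + 2)
  let τ : Equiv.Perm (J ⊕ U) := (e.symm.trans rot).trans e
  have hτ : ∀ x, τ (f x) = f (rot x) := by
    intro x
    have : e.symm (f x) = x := e.symm_apply_apply x
    change f (rot (e.symm (f x))) = _
    rw [this]
  have t0 : ∀ j, τ (Sum.inl j) = Sum.inr (vt j 0) := by
    intro j
    rw [← f0 j (by omega), hτ]
    have : rot ⟨j, ⟨0, by omega⟩⟩ = ⟨j, ⟨0 + 1, by omega⟩⟩ := by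
      change (⟨j, finRotate (len j + 1 + 1) ⟨0, _⟩⟩ : N) = _
      rw [finRotate_of_lt (by omega)]
    rw [this, f1]
  have t1 : ∀ j l, l < len j → τ (Sum.inr (vt j l)) = Sum.inr (vt j (l + 1)) := by
    intro j l hl
    rw [← f1 j l (by omega), hτ]
    have : rot ⟨j, ⟨l + 1, by omega⟩⟩ = ⟨j, ⟨l + 1 + 1, by omega⟩⟩ := by
      change (⟨j, finRotate (len j + 1 + 1) ⟨l + 1, _⟩⟩ : N) = _
      rw [finRotate_of_lt (by omega)]
    rw [this, f1]
  have t2 : ∀ j, τ (Sum.inr (vt j (len j))) = Sum.inl j := by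
    intro j
    rw [← f1 j (len j) (by omega), hτ]
    have : rot ⟨j, ⟨len j + 1, by omega⟩⟩ = ⟨j, ⟨0, by omega⟩⟩ := by
      change (⟨j, finRotate (len j + 1 + 1) ⟨len j + 1, _⟩⟩ : N) = _
      rw [finRotate_last']
    rw [this, f0]
  refine ⟨τ, fun j => ⟨vt j 0, t0 j, ?_⟩, ?_, ?_, ?_⟩
  · simp [vt]
  · intro u j h
    obtain ⟨j', l, hl, rfl⟩ := vt_surj u
    rcases hl.lt_or_eq with hl | rfl
    · rw [t1 _ _ hl] at h; cases h
    · rw [t2] at h; cases h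
      exact (P j).2.2.getVert_length
  · intro u v h
    obtain ⟨j', l, hl, rfl⟩ := vt_surj u
    rcases hl.lt_or_eq with hl | rfl
    · rw [t1 _ _ hl] at h
      cases Sum.inr_injective h
      refine ⟨j', ?_⟩
      have hlt : l < (P j').2.2.edges.length := by rw [SimpleGraph.Walk.length_edges]; exact hl
      have := List.getElem_mem hlt
      rwa [SimpleGraph.Walk.getElem_edges] at this
    · rw [t2] at h; cases h
  · intro u v j h
    obtain ⟨l, hl, h⟩ := SimpleGraph.Walk.mk_mem_edges_iff_exists _ |>.1 h
    rcases Sym2.eq_iff.1 h with ⟨h1, h2⟩ | ⟨h1, h2⟩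
    · left
      have e1 : vt j l = u := Subtype.ext h1
      have e2 : vt j (l + 1) = v := Subtype.ext h2
      rw [← e1, ← e2, t1 _ _ hl]
    · right
      have e1 : vt j l = v := Subtype.ext h1
      have e2 : vt j (l + 1) = u := Subtype.ext h2
      rw [← e1, ← e2, t1 _ _ hl]

set_option maxHeartbeats 2000000 in
/-- Halving step: from a doubly indexed family of disjoint paths and an induced matching `M`,
get half as many disjoint paths such that all edges of the old paths and of `M` between
vertices of the new paths lie on the new paths. -/
theorem halving_step {G : SimpleGraph V} {ι : Type*} [Fintype ι] (X Y : Set V)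
    (P : ι × Bool → PathPkg G) (hP : ∀ j, IsXYPath G X Y (P j))
    (hdisj : Pairwise fun i j => PkgDisjoint (P i) (P j))
    (M : Set (Sym2 V)) (hM : IsInducedMatching G M) :
    ∃ Q : ι → PathPkg G, (∀ i, IsXYPath G X Y (Q i)) ∧
      (Pairwise fun i j => PkgDisjoint (Q i) (Q j)) ∧
      (∀ i x, x ∈ pkgSupport (Q i) → ∃ j, x ∈ pkgSupport (P j)) ∧
      (∀ i j x y, x ∈ pkgSupport (Q i) → y ∈ pkgSupport (Q j) →
        (s(x, y) ∈ M ∨ ∃ l, s(x, y) ∈ pkgEdges (P l)) → s(x, y) ∈ pkgEdges (Q i)) := by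
  classical
  obtain ⟨τ, τtok, τend, τedge, τedge'⟩ := tau_exists P (fun j => (hP j).1) hdisj
  let U := {v : V // ∃ j, v ∈ pkgSupport (P j)}
  have Ufin : Finite U := by
    have : ({v : V | ∃ j, v ∈ pkgSupport (P j)}).Finite := by
      have h2 : {v : V | ∃ j, v ∈ pkgSupport (P j)} = ⋃ j, pkgSupport (P j) := by
        ext; simp
      rw [h2]
      exact Set.finite_iUnion fun j => List.finite_toSet _
    exact this.to_subtype
  have Madj : ∀ {x y}, s(x, y) ∈ M → G.Adj x y := fun h => hM.1 h
  have Muniq : ∀ {x y z}, s(x, y) ∈ M → s(x, z) ∈ M → y = z := by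
    intro x y z h1 h2
    by_contra hne
    refine (hM.2 _ h1 _ h2 ?_ x (by simp) x (by simp)).1 rfl
    intro h
    rcases Sym2.eq_iff.1 h with ⟨_, h⟩ | ⟨h, h'⟩
    · exact hne h
    · exact hne (h'.trans h)
  let r : Setoid U :=
    { r := fun u v => u = v ∨ s(u.1, v.1) ∈ M
      iseqv := by
        refine ⟨fun _ => Or.inl rfl, ?_, ?_⟩
        · rintro u v (h | h)
          · exact Or.inl h.symm
          · right; rwa [Sym2.eq_swap]
        · rintro u v w (rfl | h) (rfl | h')
          · exact Or.inl rfl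
          · exact Or.inr h'
          · exact Or.inr h
          · left
            rw [Sym2.eq_swap] at h
            exact Subtype.ext (Muniq h h') }
  let C := Quotient r
  have clsEq : ∀ u v : U, (⟦u⟧ : C) = ⟦v⟧ ↔ (u = v ∨ s(u.1, v.1) ∈ M) := fun u v => Quotient.eq
  let W := ι ⊕ C
  let π : (ι × Bool) ⊕ U → W := Sum.map Prod.fst (fun u => (⟦u⟧ : C))
  have := Fintype.ofFinite U
  have := Fintype.ofFinite C
  have fib2 : ∀ w, (Finset.univ.filter (fun a => π a = w)).card ≤ 2 := by
    intro w
    by_contra hc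
    push Not at hc
    obtain ⟨a, b, c, ha, hb, hc, hab, hac, hbc⟩ := Finset.two_lt_card_iff.1 hc
    simp only [Finset.mem_filter, Finset.mem_univ, true_and] at ha hb hc
    rcases w with i | q
    · rcases a with ⟨a, a'⟩ | a <;> rcases b with ⟨b, b'⟩ | b <;> rcases c with ⟨c, c'⟩ | c <;>
        simp [π] at ha hb hc
      have ha := Sum.inl_injective ha
      have hb := Sum.inl_injective hb
      have hc := Sum.inl_injective hc
      subst ha hb hc
      have h1 : a' ≠ b' := fun h => hab (by rw [h])
      have h2 : a' ≠ c' := fun h => hac (by rw [h])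
      have h3 : b' ≠ c' := fun h => hbc (by rw [h])
      clear hab hac hbc
      revert h1 h2 h3
      revert a' b' c'
      decide
    · rcases a with a | a <;> rcases b with b | b <;> rcases c with c | c <;>
        simp [π] at ha hb hc
      have h1 := (clsEq a b).1 (Sum.inr_injective (ha.trans hb.symm))
      have h2 := (clsEq a c).1 (Sum.inr_injective (ha.trans hc.symm))
      rcases h1 with rfl | h1
      · exact hab rfl
      rcases h2 with rfl | h2
      · exact hac rfl
      exact hbc (congrArg Sum.inr (Subtype.ext (Muniq h1 h2)))
  obtain ⟨σ, hσ⟩ := hall_perm π τ fib2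
  -- tokens move properly
  have σtok : ∀ i, ∃ j : ι × Bool, ∃ u : U, u.1 = (P j).1 ∧ σ (Sum.inl i) = Sum.inr ⟦u⟧ := by
    intro i
    rcases hσ (Sum.inl i) with ⟨a, ha, hb⟩ | ⟨_, h⟩
    · rcases a with j | a
      · obtain ⟨u, h1, h2⟩ := τtok j
        refine ⟨j, u, h2, ?_⟩
        rw [← hb, h1]; rfl
      · simp [π] at ha
    · exfalso
      have := Finset.card_le_one.1 h (Sum.inl (i, true)) (by simp [π])
        (Sum.inl (i, false)) (by simp [π])
      simp at this
  let seg : ι → Set C := fun i => {q | ∃ n, (σ ^ (n + 1)) (Sum.inl i) = Sum.inr q ∧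
    ∀ m ≤ n, ∃ q', (σ ^ (m + 1)) (Sum.inl i) = Sum.inr q'}
  have seg_disj : ∀ i j q, q ∈ seg i → q ∈ seg j → i = j := by
    have aux : ∀ i j (q : C) (n n' : ℕ), n ≤ n' → (σ ^ (n + 1)) (Sum.inl i) = Sum.inr q →
        (σ ^ (n' + 1)) (Sum.inl j) = Sum.inr q →
        (∀ m ≤ n', ∃ q', (σ ^ (m + 1)) (Sum.inl j) = Sum.inr q') → i = j := by
      intro i j q n n' hn h1 h2 h3
      obtain ⟨d, rfl⟩ := Nat.exists_eq_add_of_le hn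
      have h4 : (σ ^ (n + 1)) (Sum.inl i) = (σ ^ (n + 1)) ((σ ^ d) (Sum.inl j)) := by
        rw [h1, ← h2, ← Equiv.Perm.mul_apply, ← pow_add]
        congr 2; omega
      have h5 := (σ ^ (n + 1)).injective h4
      rcases d with _ | d
      · exact Sum.inl_injective h5
      · obtain ⟨q', hq'⟩ := h3 d (by omega)
        rw [hq'] at h5; cases h5
    rintro i j q ⟨n, h1, h2⟩ ⟨n', h1', h2'⟩
    rcases le_total n n' with h | h
    · exact aux i j q n n' h h1 h1' h2'
    · exact (aux j i q n' n h h1' h1 h2).symm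
  have seg_nofix : ∀ i q, q ∈ seg i → σ (Sum.inr q) ≠ Sum.inr q := by
    rintro i q ⟨n, h1, h2⟩ hfix
    have : (σ ^ (n + 1)) (Sum.inr q) = Sum.inr q :=
      Function.IsFixedPt.perm_pow hfix _
    rw [← h1] at this
    have := (σ ^ (n + 1)).injective this
    rw [h1] at this; cases this
  have seg_succ : ∀ i q q', q ∈ seg i → σ (Sum.inr q) = Sum.inr q' → q' ∈ seg i := by
    rintro i q q' ⟨n, h1, h2⟩ h
    have h3 : (σ ^ (n + 1 + 1)) (Sum.inl i) = Sum.inr q' := by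
      rw [pow_succ', Equiv.Perm.mul_apply, h1, h]
    refine ⟨n + 1, h3, fun m hm => ?_⟩
    rcases hm.lt_or_eq with hm | rfl
    · exact h2 m (by omega)
    · exact ⟨q', h3⟩
  have seg_pred : ∀ i q q', q' ∈ seg i → σ (Sum.inr q) = Sum.inr q' → q ∈ seg i := by
    rintro i q q' ⟨n, h1, h2⟩ h
    rw [← h, pow_succ', Equiv.Perm.mul_apply] at h1
    have h1 := σ.injective h1
    rcases n with _ | n
    · simp at h1
    · exact ⟨n, h1, fun m hm => h2 m (by omega)⟩
  -- nontrivial class or singleton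
  have single : ∀ u : U, (∃ v : V, s(u.1, v) ∈ M) ∨ ∀ a, π a = Sum.inr ⟦u⟧ → a = Sum.inr u := by
    intro u
    by_cases h : ∃ v : V, s(u.1, v) ∈ M
    · exact Or.inl h
    · right
      rintro (a | a) ha
      · simp [π] at ha
      · have : (⟦a⟧ : C) = ⟦u⟧ := Sum.inr_injective ha
        rcases (clsEq _ _).1 this with rfl | h2
        · rfl
        · rw [Sym2.eq_swap] at h2; exact absurd ⟨_, h2⟩ h
  -- consecutive vertices in segments
  have step : ∀ i j (u v : U), τ (Sum.inr u) = Sum.inr v → (⟦u⟧ : C) ∈ seg i → ⟦v⟧ ∈ seg j →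
      i = j := by
    intro i j u v h hu hv
    rcases single u with ⟨u', hu'⟩ | hs
    · rcases single v with ⟨v', hv'⟩ | hs
      · obtain ⟨l, hl⟩ := τedge u v h
        have hadj : G.Adj u.1 v.1 := (P l).2.2.adj_of_mem_edges hl
        have heq : s(u.1, u') = s(v.1, v') := by
          by_contra hne
          exact (hM.2 _ hu' _ hv' hne u.1 (by simp) v.1 (by simp)).2 hadj
        rcases Sym2.eq_iff.1 heq with ⟨h1, _⟩ | ⟨_, h2⟩
        · exact absurd h1 hadj.ne
        · rw [h2] at hu'
          have : (⟦u⟧ : C) = ⟦v⟧ := (clsEq _ _).2 (Or.inr hu')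
          rw [this] at hu
          exact seg_disj _ _ _ hu hv
      · -- `v` is a singleton class
        obtain ⟨w, hw⟩ := σ.surjective (Sum.inr ⟦v⟧)
        rcases hσ w with ⟨a, ha, hb⟩ | ⟨hfix, _⟩
        · rw [hw] at hb
          have := hs _ hb
          rw [← h] at this
          have := τ.injective this
          subst this
          subst ha
          exact seg_disj _ _ _ hu (seg_pred _ _ _ hv hw)
        · rw [hw] at hfix
          subst hfix
          exact absurd hw (seg_nofix _ _ hv)
    · rcases hσ (Sum.inr ⟦u⟧) with ⟨a, ha, hb⟩ | ⟨hfix, _⟩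
      · have := hs _ ha
        subst this
        rw [h] at hb
        exact seg_disj _ _ _ (seg_succ _ _ _ hu hb.symm) hv
      · exact absurd hfix (seg_nofix _ _ hu)
  let S : ι → Set V := fun i => {x | ∃ h : ∃ j, x ∈ pkgSupport (P j), (⟦⟨x, h⟩⟧ : C) ∈ seg i}
  have S_disj : ∀ i j x, x ∈ S i → x ∈ S j → i = j := by
    rintro i j x ⟨_, h1⟩ ⟨_, h2⟩
    exact seg_disj _ _ _ h1 h2
  have S_adj : ∀ i j x y, x ∈ S i → y ∈ S j →
      (s(x, y) ∈ M ∨ ∃ l, s(x, y) ∈ pkgEdges (P l)) → i = j := by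
    rintro i j x y ⟨hx, h1⟩ ⟨hy, h2⟩ (h | ⟨l, h⟩)
    · have : (⟦⟨x, hx⟩⟧ : C) = ⟦⟨y, hy⟩⟧ := (clsEq _ _).2 (Or.inr h)
      rw [this] at h1
      exact seg_disj _ _ _ h1 h2
    · rcases τedge' ⟨x, hx⟩ ⟨y, hy⟩ l h with h | h
      · exact step _ _ _ _ h h1 h2
      · exact (step _ _ _ _ h h2 h1).symm
  let H : ι → SimpleGraph V := fun i =>
    { Adj := fun x y => G.Adj x y ∧ x ∈ S i ∧ y ∈ S i ∧
        (s(x, y) ∈ M ∨ ∃ l, s(x, y) ∈ pkgEdges (P l))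
      symm := by
        constructor
        rintro x y ⟨h1, h2, h3, h4⟩
        refine ⟨h1.symm, h3, h2, ?_⟩
        rwa [Sym2.eq_swap]
      loopless := ⟨fun x h => G.loopless.irrefl x h.1⟩ }
  have HG : ∀ i, H i ≤ G := fun i x y h => h.1
  have Hcls : ∀ i (u v : U), (⟦u⟧ : C) = ⟦v⟧ → (⟦v⟧ : C) ∈ seg i → (H i).Reachable u.1 v.1 := by
    intro i u v h hs
    rcases (clsEq _ _).1 h with rfl | h2
    · exact SimpleGraph.Reachable.refl _
    · exact SimpleGraph.Adj.reachable
        (show (H i).Adj u.1 v.1 from ⟨Madj h2, ⟨u.2, h ▸ hs⟩, ⟨v.2, hs⟩, Or.inl h2⟩)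
  have reach : ∀ i (s0 : U), σ (Sum.inl i) = Sum.inr ⟦s0⟧ → ∀ n (u : U),
      (σ ^ (n + 1)) (Sum.inl i) = Sum.inr ⟦u⟧ →
      (∀ m ≤ n, ∃ q', (σ ^ (m + 1)) (Sum.inl i) = Sum.inr q') →
      (H i).Reachable s0.1 u.1 := by
    intro i s0 hs0 n
    induction n with
    | zero =>
      intro u hu hm
      refine Hcls i s0 u ?_ ⟨0, hu, hm⟩
      simp only [zero_add, pow_one] at hu
      exact Sum.inr_injective (hs0.symm.trans hu)
    | succ n ih =>
      intro u hu hm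
      have huseg : (⟦u⟧ : C) ∈ seg i := ⟨n + 1, hu, hm⟩
      obtain ⟨q, hq⟩ := hm n (by omega)
      have hqseg : q ∈ seg i := ⟨n, hq, fun m hm' => hm m (by omega)⟩
      rw [pow_succ', Equiv.Perm.mul_apply, hq] at hu
      rcases hσ (Sum.inr q) with ⟨a, ha, hb⟩ | ⟨hfix, _⟩
      · rcases a with a | a
        · simp [π] at ha
        · have haq : (⟦a⟧ : C) = q := Sum.inr_injective ha
          rw [hu] at hb
          rcases hτa : τ (Sum.inr a) with b | b
          · rw [hτa] at hb; simp [π] at hb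
          · rw [hτa] at hb
            have hbu : (⟦b⟧ : C) = ⟦u⟧ := Sum.inr_injective hb
            have r1 := ih a (by rw [hq, haq]) (fun m hm' => hm m (by omega))
            obtain ⟨l, hl⟩ := τedge a b hτa
            have r2 : (H i).Adj a.1 b.1 :=
              ⟨(P l).2.2.adj_of_mem_edges hl, ⟨a.2, haq ▸ hqseg⟩, ⟨b.2, hbu ▸ huseg⟩,
                Or.inr ⟨l, hl⟩⟩
            exact (r1.trans r2.reachable).trans (Hcls i b u hbu huseg)
      · exact absurd hfix (seg_nofix _ _ hqseg)
  have main : ∀ i, ∃ x y : V, x ∈ X ∧ y ∈ Y ∧ x ∈ S i ∧ (H i).Reachable x y := by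
    intro i
    obtain ⟨j, s0, hs0, hσ0⟩ := σtok i
    have hex : ∃ n, ∃ i', (σ ^ (n + 1)) (Sum.inl i) = Sum.inl i' := by
      obtain ⟨n, hn, hn1⟩ := (isOfFinOrder_of_finite σ).exists_pow_eq_one
      refine ⟨n - 1, i, ?_⟩
      rw [Nat.sub_add_cancel hn, hn1]; rfl
    let n := Nat.find hex
    obtain ⟨i', hn⟩ : ∃ i', (σ ^ (n + 1)) (Sum.inl i) = Sum.inl i' := Nat.find_spec hex
    have hmin : ∀ m < n, ∃ q', (σ ^ (m + 1)) (Sum.inl i) = Sum.inr q' := by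
      intro m hm
      have := Nat.find_min hex hm
      rcases h : (σ ^ (m + 1)) (Sum.inl i) with a | a
      · exact absurd ⟨a, h⟩ this
      · exact ⟨a, rfl⟩
    rcases hnn : n with _ | n'
    · rw [hnn] at hn
      simp only [zero_add, pow_one] at hn
      rw [hn] at hσ0; cases hσ0
    · rw [hnn] at hn hmin
      obtain ⟨q, hq⟩ := hmin n' (by omega)
      have hqseg : q ∈ seg i := ⟨n', hq, fun m hm' => hmin m (by omega)⟩
      rw [pow_succ', Equiv.Perm.mul_apply, hq] at hn
      rcases hσ (Sum.inr q) with ⟨a, ha, hb⟩ | ⟨hfix, _⟩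
      · rcases a with a | a
        · simp [π] at ha
        · have haq : (⟦a⟧ : C) = q := Sum.inr_injective ha
          rw [hn] at hb
          rcases hτa : τ (Sum.inr a) with b | b
          · refine ⟨s0.1, a.1, ?_, ?_, ⟨s0.2, 0, ?_, ?_⟩,
              reach i s0 hσ0 n' a (by rw [hq, haq]) fun m hm' => hmin m (by omega)⟩
            · rw [hs0]; exact (hP j).2.1
            · rw [τend a b hτa]; exact (hP b).2.2
            · simpa using hσ0
            · intro m hm; exact hmin m (by omega)
          · rw [hτa] at hb; simp [π] at hb
      · exact absurd hfix (seg_nofix _ _ hqseg)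
  choose x y hx hy hxS hreach using main
  choose p hp hind using fun i => exists_induced_path (H i) (hreach i)
  have supp : ∀ i, ∀ z ∈ (p i).support, z ∈ S i := by
    intro i
    have : ∀ {a b : V} (w : (H i).Walk a b), a ∈ S i → ∀ z ∈ w.support, z ∈ S i := by
      intro a b w
      induction w with
      | nil => intro ha z hz; simp at hz; exact hz ▸ ha
      | cons h w ih =>
        intro ha z hz
        rw [SimpleGraph.Walk.support_cons, List.mem_cons] at hz
        rcases hz with rfl | hz
        · exact ha
        · exact ih h.2.2.1 z hz
    exact this (p i) (hxS i)
  let Q : ι → PathPkg G := fun i => ⟨x i, y i, (p i).mapLe (HG i)⟩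
  have Qsupp : ∀ i z, z ∈ pkgSupport (Q i) ↔ z ∈ (p i).support := by
    intro i z
    change z ∈ ((p i).mapLe (HG i)).support ↔ _
    simp
  have Qedges : ∀ i z, z ∈ pkgEdges (Q i) ↔ z ∈ (p i).edges := by
    intro i z
    change z ∈ ((p i).mapLe (HG i)).edges ↔ _
    simp
  refine ⟨Q, fun i => ⟨(hp i).mapLe (HG i), hx i, hy i⟩, ?_, ?_, ?_⟩
  · intro i j hij z hz hz'
    rw [Qsupp] at hz hz'
    exact hij (S_disj _ _ z (supp _ _ hz) (supp _ _ hz'))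
  · intro i z hz
    rw [Qsupp] at hz
    exact (supp _ _ hz).1
  · intro i j a b ha hb hab
    rw [Qsupp] at ha hb
    have hij := S_adj i j a b (supp _ _ ha) (supp _ _ hb) hab
    subst hij
    rw [Qedges]
    refine hind i a ha b hb ⟨?_, supp _ _ ha, supp _ _ hb, hab⟩
    rcases hab with h | ⟨l, h⟩
    · exact Madj h
    · exact (P l).2.2.adj_of_mem_edges h

/-- Iterating the halving step. -/
theorem iterate_halving {G : SimpleGraph V} (X Y : Set V) (k : ℕ) : ∀ (m : ℕ)
    (P : Fin (2 ^ m * k) → PathPkg G) (_ : ∀ i, IsXYPath G X Y (P i))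
    (_ : Pairwise fun i j => PkgDisjoint (P i) (P j))
    (M : Fin m → Set (Sym2 V)) (_ : ∀ c, IsInducedMatching G (M c))
    (_ : ∀ i j x y, x ∈ pkgSupport (P i) → y ∈ pkgSupport (P j) → G.Adj x y →
      (∃ l, s(x, y) ∈ pkgEdges (P l)) ∨ ∃ c, s(x, y) ∈ M c),
    ∃ Q : Fin k → PathPkg G, (∀ i, IsXYPath G X Y (Q i)) ∧
      Pairwise fun i j => PkgNonAdj G (Q i) (Q j) := by
  intro m
  induction m with
  | zero =>
    intro P hP hdisj M hM hcov
    have e : Fin k ≃ Fin (2 ^ 0 * k) := finCongr (by simp)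
    refine ⟨fun i => P (e i), fun i => hP _, ?_⟩
    intro i j hij a ha b hb
    have hij' : e i ≠ e j := fun h => hij (e.injective h)
    refine ⟨?_, ?_⟩
    · rintro rfl
      exact hdisj hij' a ha hb
    · intro hadj
      rcases hcov _ _ a b ha hb hadj with ⟨l, hl⟩ | ⟨c, _⟩
      · have h1 : a ∈ pkgSupport (P l) := (P l).2.2.fst_mem_support_of_mem_edges hl
        have h2 : b ∈ pkgSupport (P l) := (P l).2.2.snd_mem_support_of_mem_edges hl
        have e1 : e i = l := by
          by_contra h; exact hdisj h a ha h1
        have e2 : e j = l := by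
          by_contra h; exact hdisj h b hb h2
        exact hij' (e1.trans e2.symm)
      · exact c.elim0
  | succ m ih =>
    intro P hP hdisj M hM hcov
    have e : Fin (2 ^ m * k) × Bool ≃ Fin (2 ^ (m + 1) * k) :=
      Fintype.equivOfCardEq (by simp; ring)
    obtain ⟨Q, hQ, hQd, hQs, hQe⟩ := halving_step X Y (fun j => P (e j)) (fun j => hP _)
      (fun i j hij => hdisj fun h => hij (e.injective h)) (M (Fin.last m)) (hM _)
    refine ih Q hQ hQd (fun c => M c.castSucc) (fun c => hM _) ?_
    intro i j x y hx hy hadj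
    obtain ⟨i', hi'⟩ := hQs i x hx
    obtain ⟨j', hj'⟩ := hQs j y hy
    rcases hcov _ _ x y hi' hj' hadj with ⟨l, hl⟩ | ⟨c, hc⟩
    · exact Or.inl ⟨i, hQe i j x y hx hy (Or.inr ⟨e.symm l, by simpa using hl⟩)⟩
    · induction c using Fin.lastCases with
      | last => exact Or.inl ⟨i, hQe i j x y hx hy (Or.inl hc)⟩
      | cast c => exact Or.inr ⟨c, hc⟩

theorem statement_2 (m k : ℕ) (G : SimpleGraph V) (X Y : Set V)
    (P : Fin (2 ^ m * k) → PathPkg G)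
    (hP : ∀ i, IsXYPath G X Y (P i))
    (hdisj : Pairwise fun i j => PkgDisjoint (P i) (P j))
    (M : Fin m → Set (Sym2 V))
    (hM : ∀ c, IsInducedMatching G (M c))
    (hMdisj : Pairwise fun c c' => Disjoint (M c) (M c'))
    (hMcover : (⋃ c, M c) =
      {e | e ∈ G.edgeSet ∧ ∀ v, v ∈ e → v ∈ ⋃ i, pkgSupport (P i)} \
        (⋃ i, pkgEdges (P i))) :
    ∃ Q : Fin k → PathPkg G,
      (∀ i, IsXYPath G X Y (Q i)) ∧
      Pairwise fun i j => PkgNonAdj G (Q i) (Q j) := by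
  refine iterate_halving X Y k m P hP hdisj M hM ?_
  intro i j x y hx hy hadj
  by_cases h : ∃ l, s(x, y) ∈ pkgEdges (P l)
  · exact Or.inl h
  · right
    have : s(x, y) ∈ ⋃ c, M c := by
      rw [hMcover]
      refine ⟨⟨hadj, ?_⟩, by simpa using h⟩
      intro v hv
      rcases Sym2.mem_iff.1 hv with rfl | rfl
      · exact Set.mem_iUnion.2 ⟨i, hx⟩
      · exact Set.mem_iUnion.2 ⟨j, hy⟩
    simpa using this
end

section
/- Let Δ and k be natural numbers, let G be a simple graph with maximum degree at most Δ, and let X, Y ⊆ V(G). Then either (1) G contains k pairwise non-adjacent X-Y-paths, or (2) there exists a set of fewer than 2^{2Δ(Δ−1)+1}·k vertices of G that separates X and Y. -/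
open SimpleGraph

universe u

variable {V : Type u}

/-- Initial piece of a path: a chain `l ++ [v]` starting in `X`. -/
def PreP {α : Type*} (r : α → α → Prop) (X : Set α) (l : List α) (v : α) : Prop :=
  (l ++ [v]).IsChain r ∧ ∃ x ∈ (l ++ [v]).head?, x ∈ X

/-- Final piece of a path: a chain `v :: l` ending in `Y`. -/
def SufP {α : Type*} (r : α → α → Prop) (Y : Set α) (v : α) (l : List α) : Prop :=
  (v :: l).IsChain r ∧ ∃ y ∈ (v :: l).getLast?, y ∈ Y

/-- A chain from `X` to `Y`. -/
def LP {α : Type*} (r : α → α → Prop) (X Y : Set α) (l : List α) : Prop :=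
  l.IsChain r ∧ (∃ x ∈ l.head?, x ∈ X) ∧ (∃ y ∈ l.getLast?, y ∈ Y)

theorem LP_split {α : Type*} {r : α → α → Prop} {X Y : Set α} {l₁ l₂ : List α} {v : α} :
    LP r X Y (l₁ ++ v :: l₂) ↔ PreP r X l₁ v ∧ SufP r Y v l₂ := by
  unfold LP PreP SufP
  rw [List.isChain_split]
  have h1 : (l₁ ++ v :: l₂).head? = (l₁ ++ [v]).head? := by simp [List.head?_append]
  have h2 : (l₁ ++ v :: l₂).getLast? = (v :: l₂).getLast? := by
    simp [List.getLast?_append, List.getLast?_cons]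
  rw [h1, h2]
  tauto

theorem PreP_nil {α : Type*} {r : α → α → Prop} {X : Set α} {v : α} :
    PreP r X [] v ↔ v ∈ X := by
  simp [PreP]

theorem SufP_nil {α : Type*} {r : α → α → Prop} {Y : Set α} {v : α} :
    SufP r Y v [] ↔ v ∈ Y := by
  simp [SufP]

theorem SufP_cons {α : Type*} {r : α → α → Prop} {Y : Set α} {v w : α} {l : List α} :
    SufP r Y v (w :: l) ↔ r v w ∧ SufP r Y w l := by
  simp [SufP, List.getLast?_cons_cons, and_assoc]

theorem PreP_concat {α : Type*} {r : α → α → Prop} {X : Set α} {v w : α} {l : List α} :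
    PreP r X (l ++ [w]) v ↔ r w v ∧ PreP r X l w := by
  unfold PreP
  have h1 : (l ++ [w] ++ [v]).head? = (l ++ [w]).head? := by
    cases l <;> simp
  rw [h1, List.append_assoc, List.singleton_append, List.isChain_split]
  simp
  tauto

theorem LP_ne_nil {α : Type*} {r : α → α → Prop} {X Y : Set α} {l : List α}
    (h : LP r X Y l) : l ≠ [] := by
  rintro rfl
  simp [LP] at h

theorem first_hit {α : Type*} (T : Set α) (l : List α) (h : ∃ z ∈ l, z ∈ T) :
    ∃ l₁ t l₂, l = l₁ ++ t :: l₂ ∧ t ∈ T ∧ ∀ z ∈ l₁, z ∉ T := by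
  induction l with
  | nil => simp at h
  | cons a l ih =>
    by_cases ha : a ∈ T
    · exact ⟨[], a, l, rfl, ha, by simp⟩
    · obtain ⟨l₁, t, l₂, h1, h2, h3⟩ := ih (by
        obtain ⟨z, hz, hzT⟩ := h
        rcases List.mem_cons.1 hz with rfl | hz
        · exact absurd hzT ha
        · exact ⟨z, hz, hzT⟩)
      refine ⟨a :: l₁, t, l₂, by simp [h1], h2, ?_⟩
      intro z hz
      rcases List.mem_cons.1 hz with rfl | hz
      · exact ha
      · exact h3 z hz

theorem last_hit {α : Type*} (T : Set α) (l : List α) (h : ∃ z ∈ l, z ∈ T) :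
    ∃ l₁ t l₂, l = l₁ ++ t :: l₂ ∧ t ∈ T ∧ ∀ z ∈ l₂, z ∉ T := by
  obtain ⟨l₁, t, l₂, h1, h2, h3⟩ := first_hit T l.reverse (by simpa using h)
  refine ⟨l₂.reverse, t, l₁.reverse, ?_, h2, by simpa using h3⟩
  have := congrArg List.reverse h1
  simpa using this

theorem chain_del_left {α : Type*} {r : α → α → Prop} {x y : α} :
    ∀ (l : List α) (t : α), (l ++ [t]).IsChain r → x ∉ l →
      (l ++ [t]).IsChain (fun a b => r a b ∧ ¬ (a = x ∧ b = y)) := by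
  intro l
  induction l with
  | nil => intro t _ _; simp
  | cons a l ih =>
    intro t h hx
    have hx' : a ≠ x ∧ x ∉ l := by
      constructor
      · rintro rfl; simp at hx
      · intro h'; exact hx (List.mem_cons_of_mem _ h')
    cases l with
    | nil =>
      simp only [List.cons_append, List.nil_append, List.isChain_cons_cons] at h ⊢
      exact ⟨⟨h.1, fun hh => hx'.1 hh.1⟩, by simp⟩
    | cons b l =>
      simp only [List.cons_append, List.isChain_cons_cons] at h ih ⊢
      exact ⟨⟨h.1, fun hh => hx'.1 hh.1⟩, ih t h.2 hx'.2⟩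

theorem chain_del_right {α : Type*} {r : α → α → Prop} {x y : α} :
    ∀ (l : List α) (t : α), (t :: l).IsChain r → y ∉ l →
      (t :: l).IsChain (fun a b => r a b ∧ ¬ (a = x ∧ b = y)) := by
  intro l
  induction l with
  | nil => intro t _ _; simp
  | cons a l ih =>
    intro t h hx
    simp only [List.isChain_cons_cons] at h ⊢
    refine ⟨⟨h.1, fun hh => hx (by simp [hh.2])⟩, ih a h.2 ?_⟩
    intro h'; exact hx (List.mem_cons_of_mem _ h')

theorem LP_mono {α : Type*} {r r' : α → α → Prop} {X Y X' Y' : Set α} {l : List α}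
    (hr : ∀ a b, r a b → r' a b) (hX : X ⊆ X') (hY : Y ⊆ Y') (h : LP r X Y l) :
    LP r' X' Y' l := by
  obtain ⟨h1, ⟨x, h2, h3⟩, ⟨y, h4, h5⟩⟩ := h
  exact ⟨h1.imp hr, ⟨x, h2, hX h3⟩, ⟨y, h4, hY h5⟩⟩

/-- Menger's theorem for relations with finitely many arcs. -/
theorem menger_fin_s3 {α : Type*} (n : ℕ) : ∀ (r : α → α → Prop) (X Y : Set α),
    {p : α × α | r p.1 p.2}.Finite → {p : α × α | r p.1 p.2}.ncard = n → ∀ k : ℕ,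
    (∀ S : Finset α, (∀ l, LP r X Y l → ∃ z ∈ S, z ∈ l) → k ≤ S.card) →
    ∃ P : Fin k → List α, (∀ i, LP r X Y (P i)) ∧ ∀ i j v, v ∈ P i → v ∈ P j → i = j := by
  classical
  induction n with
  | zero =>
    intro r X Y hf hn k hS
    rw [Set.ncard_eq_zero hf] at hn
    have hr : ∀ a b, ¬ r a b := by
      intro a b hab
      have : (a, b) ∈ {p : α × α | r p.1 p.2} := hab
      rw [hn] at this
      exact this
    have hT : ∃ T : Finset α, (T : Set α) ⊆ X ∩ Y ∧ T.card = k := by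
      by_cases hinf : (X ∩ Y).Infinite
      · exact hinf.exists_subset_card_eq k
      · have hfin : (X ∩ Y).Finite := Set.not_infinite.1 hinf
        have := hS hfin.toFinset (by
          intro l hl
          rcases l with _ | ⟨a, _ | ⟨b, l⟩⟩
          · exact absurd rfl (LP_ne_nil hl)
          · refine ⟨a, ?_, by simp⟩
            simp [LP] at hl
            simpa using hl
          · exact absurd (List.isChain_cons_cons.1 hl.1).1 (hr _ _))
        obtain ⟨T, hT1, hT2⟩ := Finset.exists_subset_card_eq this
        refine ⟨T, ?_, hT2⟩
        intro t ht
        simpa using hT1 ht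
    obtain ⟨T, hT1, hT2⟩ := hT
    let e := (T.equivFinOfCardEq hT2).symm
    refine ⟨fun i => [(e i : α)], ?_, ?_⟩
    · intro i
      have := hT1 (e i).2
      simpa [LP] using this
    · intro i j v hi hj
      simp only [List.mem_singleton] at hi hj
      exact e.injective (Subtype.ext (hi.symm.trans hj))
  | succ n ih =>
    intro r X Y hf hn k hS
    have hne : {p : α × α | r p.1 p.2}.Nonempty := by
      rw [← Set.ncard_pos hf]; omega
    obtain ⟨⟨x, y⟩, hxy⟩ := hne
    have hxy' : r x y := hxy
    set r' : α → α → Prop := fun a b => r a b ∧ ¬ (a = x ∧ b = y) with hr'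
    have hset : {p : α × α | r' p.1 p.2} = {p : α × α | r p.1 p.2} \ {(x, y)} := by
      ext ⟨a, b⟩
      simp [hr']
    have hf' : {p : α × α | r' p.1 p.2}.Finite := by rw [hset]; exact hf.sdiff
    have hn' : {p : α × α | r' p.1 p.2}.ncard = n := by
      rw [hset, Set.ncard_sdiff_singleton_of_mem hxy]; omega
    have hrr : ∀ a b, r' a b → r a b := fun a b h => h.1
    by_cases hsep : ∀ S : Finset α, (∀ l, LP r' X Y l → ∃ z ∈ S, z ∈ l) → k ≤ S.card
    · obtain ⟨P, hP1, hP2⟩ := ih r' X Y hf' hn' k hsep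
      exact ⟨P, fun i => LP_mono hrr subset_rfl subset_rfl (hP1 i), hP2⟩
    push Not at hsep
    obtain ⟨S, hS1, hS2⟩ := hsep
    have hitx : ∀ l, LP r X Y l → ∃ z ∈ l, z ∈ ((insert x S : Finset α) : Set α) := by
      intro l hl
      by_cases hx : x ∈ l
      · exact ⟨x, hx, by simp⟩
      · obtain ⟨l', t, rfl⟩ : ∃ l' t, l = l' ++ [t] :=
          ⟨l.dropLast, l.getLast (LP_ne_nil hl), (List.dropLast_append_getLast _).symm⟩
        obtain ⟨z, hz1, hz2⟩ := hS1 (l' ++ [t])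
          ⟨chain_del_left l' t hl.1 (fun h => hx (by simp [h])), hl.2⟩
        exact ⟨z, hz2, by simp [hz1]⟩
    have hity : ∀ l, LP r X Y l → ∃ z ∈ l, z ∈ ((insert y S : Finset α) : Set α) := by
      intro l hl
      by_cases hx : y ∈ l
      · exact ⟨y, hx, by simp⟩
      · obtain ⟨t, l', rfl⟩ := List.exists_cons_of_ne_nil (LP_ne_nil hl)
        obtain ⟨z, hz1, hz2⟩ := hS1 (t :: l')
          ⟨chain_del_right l' t hl.1 (fun h => hx (by simp [h])), hl.2⟩
        exact ⟨z, hz2, by simp [hz1]⟩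
    obtain ⟨A, hA1, hA2⟩ := ih r' X ((insert x S : Finset α) : Set α) hf' hn' k (by
      intro T hT
      apply hS
      intro l hl
      obtain ⟨l₁, t, l₂, rfl, ht, hl1⟩ := first_hit _ l (hitx l hl)
      obtain ⟨hp, hs⟩ := LP_split.1 hl
      obtain ⟨z, hz1, hz2⟩ := hT (l₁ ++ [t]) (LP_split.2 ⟨⟨chain_del_left _ _ hp.1
        (fun h => hl1 x h (by simp)), hp.2⟩, SufP_nil.2 ht⟩)
      refine ⟨z, hz1, ?_⟩
      simp at hz2 ⊢
      tauto)
    obtain ⟨B, hB1, hB2⟩ := ih r' ((insert y S : Finset α) : Set α) Y hf' hn' k (by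
      intro T hT
      apply hS
      intro l hl
      obtain ⟨l₁, t, l₂, rfl, ht, hl1⟩ := last_hit _ l (hity l hl)
      obtain ⟨hp, hs⟩ := LP_split.1 hl
      obtain ⟨z, hz1, hz2⟩ := hT ([] ++ t :: l₂) (LP_split.2 ⟨PreP_nil.2 ht,
        ⟨chain_del_right _ _ hs.1 (fun h => hl1 y h (by simp)), hs.2⟩⟩)
      refine ⟨z, hz1, ?_⟩
      simp at hz2 ⊢
      tauto)
    have hA3 : ∀ i, ∃ l a, PreP r' X l a ∧ a ∈ insert x S ∧ (∀ z ∈ l, z ∉ insert x S) ∧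
        (∀ z ∈ l, z ∈ A i) ∧ a ∈ A i := by
      intro i
      have h := hA1 i
      obtain ⟨l₁, t, l₂, he, ht, hl1⟩ := first_hit ((insert x S : Finset α) : Set α) (A i) (by
        obtain ⟨_, _, y', hy1, hy2⟩ := h
        exact ⟨y', List.mem_of_mem_getLast? hy1, hy2⟩)
      rw [he] at h
      refine ⟨l₁, t, (LP_split.1 h).1, by simpa using ht, ?_, ?_, by simp [he]⟩
      · intro z hz; simpa using hl1 z hz
      · intro z hz; simp [he, hz]
    have hB3 : ∀ i, ∃ b m, SufP r' Y b m ∧ b ∈ insert y S ∧ (∀ z ∈ m, z ∉ insert y S) ∧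
        (∀ z ∈ m, z ∈ B i) ∧ b ∈ B i := by
      intro i
      have h := hB1 i
      obtain ⟨l₁, t, l₂, he, ht, hl1⟩ := last_hit ((insert y S : Finset α) : Set α) (B i) (by
        obtain ⟨_, ⟨y', hy1, hy2⟩, _⟩ := h
        exact ⟨y', List.mem_of_mem_head? hy1, hy2⟩)
      rw [he] at h
      refine ⟨t, l₂, (LP_split.1 h).2, by simpa using ht, ?_, ?_, by simp [he]⟩
      · intro z hz; simpa using hl1 z hz
      · intro z hz; simp [he, hz]
    choose l a hl ha hlS hlA haA using hA3
    choose b m hm hb hmS hmB hbB using hB3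
    have hainj : Function.Injective a := fun i j h => hA2 i j (a i) (haA i) (h ▸ haA j)
    have hbinj : Function.Injective b := fun i j h => hB2 i j (b i) (hbB i) (h ▸ hbB j)
    have hkx : k ≤ (insert x S).card := by
      have := Finset.card_le_card_of_injOn (s := Finset.univ) (t := insert x S) a
        (by intro i _; exact ha i) hainj.injOn
      simpa using this
    have hky : k ≤ (insert y S).card := by
      have := Finset.card_le_card_of_injOn (s := Finset.univ) (t := insert y S) b
        (by intro i _; exact hb i) hbinj.injOn
      simpa using this
    have hxS : x ∉ S := by
      intro h; rw [Finset.insert_eq_of_mem h] at hkx; omega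
    have hyS : y ∉ S := by
      intro h; rw [Finset.insert_eq_of_mem h] at hky; omega
    have hcy : (insert y S).card ≤ k := by
      rw [Finset.card_insert_of_notMem hyS]; omega
    have hbsurj : ∀ z ∈ insert y S, ∃ j, b j = z := by
      have : Finset.univ.image b = insert y S := by
        apply Finset.eq_of_subset_of_card_le
        · intro z hz
          obtain ⟨j, _, rfl⟩ := Finset.mem_image.1 hz
          exact hb j
        · rw [Finset.card_image_of_injective _ hbinj]; simpa using hcy
      intro z hz
      rw [← this] at hz
      obtain ⟨j, _, h⟩ := Finset.mem_image.1 hz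
      exact ⟨j, h⟩
    have key : ∀ i j v, (v ∈ l i ∨ v = a i) → (v = b j ∨ v ∈ m j) → a i = b j ∧ a i ∈ S := by
      intro i j v h1 h2
      have hlS' : ∀ z ∈ l i, z ∉ S := fun z hz h => hlS i z hz (by simp [h])
      have hmS' : ∀ z ∈ m j, z ∉ S := fun z hz h => hmS j z hz (by simp [h])
      have P1 : ∃ l₁, PreP r' X l₁ v ∧ (∀ z ∈ l₁, z ∉ S) := by
        rcases h1 with h1 | rfl
        · obtain ⟨s, t, he⟩ := List.mem_iff_append.1 h1
          have := hl i
          rw [he] at this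
          refine ⟨s, ?_, fun z hz => hlS' z (by simp [he, hz])⟩
          have h3 : LP r' X Set.univ (s ++ v :: (t ++ [a i])) := by
            have h4 : LP r' X Set.univ ((s ++ v :: t) ++ a i :: []) :=
              LP_split.2 ⟨this, SufP_nil.2 trivial⟩
            simpa using h4
          exact (LP_split.1 h3).1
        · exact ⟨l i, hl i, hlS'⟩
      have P2 : ∃ m₁, SufP r' Y v m₁ ∧ (∀ z ∈ m₁, z ∉ S) := by
        rcases h2 with rfl | h2
        · exact ⟨m j, hm j, hmS'⟩
        · obtain ⟨s, t, he⟩ := List.mem_iff_append.1 h2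
          have := hm j
          rw [he] at this
          refine ⟨t, ?_, fun z hz => hmS' z (by simp [he, hz])⟩
          have h3 : LP r' Set.univ Y ((b j :: s) ++ v :: t) := by
            have h4 : LP r' Set.univ Y ([] ++ b j :: (s ++ v :: t)) :=
              LP_split.2 ⟨PreP_nil.2 trivial, this⟩
            simpa using h4
          exact (LP_split.1 h3).2
      obtain ⟨l₁, hl₁, hl₂⟩ := P1
      obtain ⟨m₁, hm₁, hm₂⟩ := P2
      obtain ⟨z, hz1, hz2⟩ := hS1 _ (LP_split.2 ⟨hl₁, hm₁⟩)
      have hzv : z = v := by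
        simp only [List.mem_append, List.mem_cons] at hz2
        rcases hz2 with h | h | h
        · exact absurd hz1 (hl₂ z h)
        · exact h
        · exact absurd hz1 (hm₂ z h)
      subst hzv
      rcases h1 with h1 | h1
      · exact absurd hz1 (hlS' _ h1)
      · rcases h2 with h2 | h2
        · exact ⟨h1.symm.trans h2, h1 ▸ hz1⟩
        · exact absurd hz1 (hmS' _ h2)
    have hσ : ∀ i, ∃ j, (a i = x ∧ b j = y) ∨ (a i ∈ S ∧ b j = a i) := by
      intro i
      rcases Finset.mem_insert.1 (ha i) with h | h
      · obtain ⟨j, hj⟩ := hbsurj y (by simp)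
        exact ⟨j, Or.inl ⟨h, hj⟩⟩
      · obtain ⟨j, hj⟩ := hbsurj (a i) (by simp [h])
        exact ⟨j, Or.inr ⟨h, hj⟩⟩
    choose σ hσ using hσ
    have hσinj : Function.Injective σ := by
      intro i j hij
      apply hainj
      have h1 := hσ i
      have h2 := hσ j
      rw [← hij] at h2
      rcases h1 with ⟨h1, h1'⟩ | ⟨h1, h1'⟩ <;> rcases h2 with ⟨h2, h2'⟩ | ⟨h2, h2'⟩
      · rw [h1, h2]
      · rw [h1'] at h2'; exact absurd (h2' ▸ h2) hyS
      · rw [h2'] at h1'; exact absurd (h1' ▸ h1) hyS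
      · rw [← h1', ← h2']
    have hC : ∀ i, ∃ c, LP r X Y c ∧
        ∀ v ∈ c, (v ∈ l i ∨ v = a i) ∨ (v = b (σ i) ∨ v ∈ m (σ i)) := by
      intro i
      have e1 : ∀ {u w}, PreP r' X u w → PreP r X u w := fun h => ⟨h.1.imp hrr, h.2⟩
      have e2 : ∀ {u w}, SufP r' Y u w → SufP r Y u w := fun h => ⟨h.1.imp hrr, h.2⟩
      rcases hσ i with ⟨h1, h2⟩ | ⟨h1, h2⟩
      · refine ⟨l i ++ a i :: (b (σ i) :: m (σ i)), LP_split.2 ⟨e1 (hl i),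
          SufP_cons.2 ⟨?_, e2 (hm _)⟩⟩, ?_⟩
        · rw [h1, h2]; exact hxy'
        · intro v hv; simp at hv; tauto
      · refine ⟨l i ++ a i :: m (σ i), LP_split.2 ⟨e1 (hl i), ?_⟩, ?_⟩
        · rw [← h2]; exact e2 (hm _)
        · intro v hv; simp at hv; tauto
    choose C hC1 hC2 using hC
    refine ⟨C, hC1, ?_⟩
    have cross : ∀ i j v, (v ∈ l i ∨ v = a i) → (v = b (σ j) ∨ v ∈ m (σ j)) → i = j := by
      intro i j v h1 h2
      obtain ⟨h3, h4⟩ := key i (σ j) v h1 h2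
      rcases hσ i with ⟨h5, h6⟩ | ⟨h5, h6⟩
      · rw [h5] at h4; exact absurd h4 hxS
      · exact hσinj (hbinj (h6.trans h3))
    have inA : ∀ i v, (v ∈ l i ∨ v = a i) → v ∈ A i := by
      rintro i v (h | rfl)
      · exact hlA i v h
      · exact haA i
    have inB : ∀ i v, (v = b i ∨ v ∈ m i) → v ∈ B i := by
      rintro i v (rfl | h)
      · exact hbB i
      · exact hmB i v h
    intro i j v hi hj
    rcases hC2 i v hi with h1 | h1 <;> rcases hC2 j v hj with h2 | h2
    · exact hA2 i j v (inA _ _ h1) (inA _ _ h2)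
    · exact cross i j v h1 h2
    · exact (cross j i v h2 h1).symm
    · exact hσinj (hB2 _ _ v (inB _ _ h1) (inB _ _ h2))

/-- Menger's theorem for arbitrary relations and a finite number of paths. -/
theorem menger_inf {α : Type*} (r : α → α → Prop) (X Y : Set α) (k : ℕ) :
    (∃ P : Fin k → List α, (∀ i, LP r X Y (P i)) ∧ ∀ i j v, v ∈ P i → v ∈ P j → i = j) ∨
    (∃ Z : Set α, Z.Finite ∧ Z.ncard < k ∧ ∀ l, LP r X Y l → ∃ z ∈ Z, z ∈ l) := by
  classical
  by_contra hcon
  push Not at hcon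
  obtain ⟨h1, h2⟩ := hcon
  have hfin : ∀ W : Finset α, ∃ S : Finset α, S.card < k ∧
      ∀ l, LP r X Y l → (∀ v ∈ l, v ∈ W) → ∃ z ∈ S, z ∈ l := by
    intro W
    by_contra hW
    push Not at hW
    have hfinite : {p : α × α | r p.1 p.2 ∧ p.1 ∈ W ∧ p.2 ∈ W}.Finite := by
      apply ((W ×ˢ W).finite_toSet).subset
      rintro ⟨a, b⟩ ⟨_, h⟩
      simpa using h
    obtain ⟨P, hP1, hP2⟩ := menger_fin_s3 _ (fun a b => r a b ∧ a ∈ W ∧ b ∈ W) (X ∩ W) (Y ∩ W)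
      hfinite rfl k (by
        intro S hS
        by_contra hlt
        obtain ⟨l, hl1, hl2, hl3⟩ := hW S (by omega)
        obtain ⟨z, hz1, hz2⟩ := hS l (by
          obtain ⟨c, ⟨x, hx, hx'⟩, ⟨y, hy, hy'⟩⟩ := hl1
          refine ⟨?_, ⟨x, hx, hx', hl2 x (List.mem_of_mem_head? hx)⟩,
            ⟨y, hy, hy', hl2 y (List.mem_of_mem_getLast? hy)⟩⟩
          rw [List.isChain_iff_forall_rel_of_append_cons_cons] at c ⊢
          intro a b l₁ l₂ he
          exact ⟨c he, hl2 a (by simp [he]), hl2 b (by simp [he])⟩)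
        exact hl3 z hz1 hz2)
    obtain ⟨i, j, v, h3, h4, h5⟩ := h1 P (fun i => LP_mono (fun a b h => h.1)
      Set.inter_subset_left Set.inter_subset_left (hP1 i))
    exact h5 (hP2 i j v h3 h4)
  choose S hS1 hS2 using hfin
  let U : Ultrafilter (Finset α) := Ultrafilter.of Filter.atTop
  have hU : (U : Filter (Finset α)) ≤ Filter.atTop := Ultrafilter.of_le _
  let Z : Set α := {v | ∀ᶠ W in (U : Filter (Finset α)), v ∈ S W}
  have hT : ∀ T : Finset α, (T : Set α) ⊆ Z → T.card < k := by
    intro T hT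
    have : ∀ᶠ W in (U : Filter (Finset α)), ∀ v ∈ T, v ∈ S W := by
      rw [Filter.eventually_all_finset]
      exact fun v hv => hT hv
    obtain ⟨W, hW⟩ := this.exists
    exact (Finset.card_le_card hW).trans_lt (hS1 W)
  have hZ : Z.Finite := by
    by_contra hinf
    obtain ⟨T, hT1, hT2⟩ := Set.Infinite.exists_subset_card_eq hinf k
    have := hT T hT1
    omega
  obtain ⟨l, hl1, hl2⟩ := h2 Z hZ (by
    rw [Set.ncard_eq_toFinset_card Z hZ]
    exact hT _ (by simp))
  have hev : ∀ᶠ W in (U : Filter (Finset α)), ∃ v ∈ {v | v ∈ l}, v ∈ S W := by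
    have h3 : ∀ᶠ W in (Filter.atTop : Filter (Finset α)), l.toFinset ≤ W :=
      Filter.eventually_ge_atTop _
    filter_upwards [hU h3] with W hW
    obtain ⟨z, hz1, hz2⟩ := hS2 W l hl1 (fun v hv => hW (by simpa using hv))
    exact ⟨z, hz2, hz1⟩
  have : (⋃ v ∈ {v | v ∈ l}, {W | v ∈ S W}) ∈ U := by
    refine Filter.mem_of_superset hev ?_
    intro W hW
    simpa using hW
  rw [Ultrafilter.finite_biUnion_mem_iff l.finite_toSet] at this
  obtain ⟨v, hv1, hv2⟩ := this
  exact hl2 v hv2 hv1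

/-- A chain from `X` to `Y` of minimum length among those using only its vertices. -/
def MinLP {α : Type*} (r : α → α → Prop) (X Y : Set α) (l : List α) : Prop :=
  LP r X Y l ∧ ∀ l', LP r X Y l' → (∀ v ∈ l', v ∈ l) → l.length ≤ l'.length

theorem exists_minLP {α : Type*} {r : α → α → Prop} {X Y : Set α} (n : ℕ) :
    ∀ l : List α, l.length ≤ n → LP r X Y l → ∃ l', MinLP r X Y l' ∧ ∀ v ∈ l', v ∈ l := by
  induction n with
  | zero =>
    intro l hl h
    exact absurd (List.length_eq_zero_iff.1 (Nat.le_zero.1 hl)) (LP_ne_nil h)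
  | succ n ih =>
    intro l hl h
    by_cases hm : MinLP r X Y l
    · exact ⟨l, hm, fun v hv => hv⟩
    · have : ∃ l', LP r X Y l' ∧ (∀ v ∈ l', v ∈ l) ∧ l'.length < l.length := by
        by_contra hcon
        push Not at hcon
        exact hm ⟨h, hcon⟩
      obtain ⟨l', h1, h2, h3⟩ := this
      obtain ⟨l'', h4, h5⟩ := ih l' (by omega) h1
      exact ⟨l'', h4, fun v hv => h2 v (h5 v hv)⟩

open Classical in
theorem minLP_degree {α : Type*} {r : α → α → Prop} (hsym : ∀ a b, r a b → r b a)
    (hirr : ∀ a, ¬ r a a) {X Y : Set α} {l : List α} (h : MinLP r X Y l) (v : α) (hv : v ∈ l) :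
    {w | w ∈ l ∧ r v w}.ncard + (if v ∈ X then 1 else 0) + (if v ∈ Y then 1 else 0) = 2 := by
  obtain ⟨l₁, l₂, rfl⟩ := List.mem_iff_append.1 hv
  obtain ⟨hLP, hmin⟩ := h
  obtain ⟨hp, hs⟩ := LP_split.1 hLP
  have hX : v ∈ X → l₁ = [] := by
    intro hvX
    have := hmin ([] ++ v :: l₂) (LP_split.2 ⟨PreP_nil.2 hvX, hs⟩) (by simp; tauto)
    simp at this
    exact this
  have hY : v ∈ Y → l₂ = [] := by
    intro hvY
    have := hmin (l₁ ++ v :: []) (LP_split.2 ⟨hp, SufP_nil.2 hvY⟩) (by simp; tauto)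
    simp at this
    exact this
  have h2 : ∀ u ∈ l₂, r v u → ∃ m, l₂ = u :: m := by
    intro u hu hr
    obtain ⟨s, t, rfl⟩ := List.mem_iff_append.1 hu
    have e : l₁ ++ v :: (s ++ u :: t) = (l₁ ++ v :: s) ++ u :: t := by simp
    have hs' : SufP r Y u t := (LP_split.1 (e ▸ hLP)).2
    have := hmin (l₁ ++ v :: (u :: t)) (LP_split.2 ⟨hp, SufP_cons.2 ⟨hr, hs'⟩⟩)
      (by intro w hw; simp at hw ⊢; tauto)
    simp at this
    exact ⟨t, by simp [this]⟩
  have h1 : ∀ u ∈ l₁, r v u → ∃ m, l₁ = m ++ [u] := by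
    intro u hu hr
    obtain ⟨s, t, rfl⟩ := List.mem_iff_append.1 hu
    have e : (s ++ u :: t) ++ v :: l₂ = s ++ u :: (t ++ v :: l₂) := by simp
    have hs' : PreP r X s u := (LP_split.1 (e ▸ hLP)).1
    have := hmin (s ++ u :: (v :: l₂)) (LP_split.2 ⟨hs', SufP_cons.2 ⟨hsym _ _ hr, hs⟩⟩)
      (by intro w hw; simp at hw ⊢; tauto)
    simp only [List.length_append, List.length_cons] at this
    have ht : t = [] := List.length_eq_zero_iff.1 (by omega)
    exact ⟨s, by simp [ht]⟩
  rcases List.eq_nil_or_concat l₁ with rfl | ⟨m₁, a, rfl⟩ <;> rcases l₂ with _ | ⟨b, m₂⟩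
  · have e : {w | w ∈ [] ++ [v] ∧ r v w} = ∅ := by
      ext w
      simp only [Set.mem_ofPred_eq, Set.mem_empty_iff_false, iff_false]
      rintro ⟨hw, hr⟩
      simp at hw
      subst hw
      exact hirr _ hr
    rw [e, if_pos (PreP_nil.1 hp), if_pos (SufP_nil.1 hs)]
    simp
  · have e : {w | w ∈ [] ++ v :: b :: m₂ ∧ r v w} = {b} := by
      ext w
      simp only [Set.mem_ofPred_eq, Set.mem_singleton_iff]
      constructor
      · rintro ⟨hw, hr⟩
        simp only [List.nil_append] at hw
        rcases List.mem_cons.1 hw with rfl | hw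
        · exact absurd hr (hirr _)
        · obtain ⟨m, hm⟩ := h2 w hw hr
          simp at hm
          exact hm.1.symm
      · rintro rfl
        exact ⟨by simp, (SufP_cons.1 hs).1⟩
    rw [e, if_pos (PreP_nil.1 hp), if_neg (fun h => by simpa using hY h)]
    simp
  · simp only [List.concat_eq_append] at *
    have e : {w | w ∈ m₁ ++ [a] ++ [v] ∧ r v w} = {a} := by
      ext w
      simp only [Set.mem_ofPred_eq, Set.mem_singleton_iff]
      constructor
      · rintro ⟨hw, hr⟩
        rcases List.mem_append.1 hw with hw | hw
        · obtain ⟨m, hm⟩ := h1 w hw hr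
          have := congrArg List.getLast? hm
          simp at this
          exact this.symm
        · simp at hw
          subst hw
          exact absurd hr (hirr _)
      · rintro rfl
        exact ⟨by simp, hsym _ _ (PreP_concat.1 hp).1⟩
    rw [e, if_neg (fun h => by simpa using hX h), if_pos (SufP_nil.1 hs)]
    simp
  · simp only [List.concat_eq_append] at *
    have hab : a ≠ b := by
      rintro rfl
      have := hmin (m₁ ++ a :: m₂) (LP_split.2 ⟨(PreP_concat.1 hp).2, (SufP_cons.1 hs).2⟩)
        (by intro w hw; simp at hw ⊢; tauto)
      simp only [List.length_append, List.length_cons] at this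
      omega
    have e : {w | w ∈ m₁ ++ [a] ++ v :: b :: m₂ ∧ r v w} = {a, b} := by
      ext w
      simp only [Set.mem_ofPred_eq, Set.mem_insert_iff, Set.mem_singleton_iff]
      constructor
      · rintro ⟨hw, hr⟩
        rcases List.mem_append.1 hw with hw | hw
        · obtain ⟨m, hm⟩ := h1 w hw hr
          have := congrArg List.getLast? hm
          simp at this
          exact Or.inl this.symm
        · rcases List.mem_cons.1 hw with rfl | hw
          · exact absurd hr (hirr _)
          · obtain ⟨m, hm⟩ := h2 w hw hr
            simp at hm
            exact Or.inr hm.1.symm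
      · rintro (rfl | rfl)
        · exact ⟨by simp, hsym _ _ (PreP_concat.1 hp).1⟩
        · exact ⟨by simp, (SufP_cons.1 hs).1⟩
    rw [e, if_neg (fun h => by simpa using hX h), if_neg (fun h => by simpa using hY h),
      Set.ncard_pair hab]

/-- The relation induced on blobs. -/
def quotRel {α β : Type*} (π : α → β) (r : α → α → Prop) (a b : β) : Prop :=
  ∃ u v, π u = a ∧ π v = b ∧ r u v

theorem lift_suf {α β : Type*} {π : α → β} {r : α → α → Prop} {W Y : Set α}
    (hr : ∀ u v, r u v → u ∈ W ∧ v ∈ W) (hYW : Y ⊆ W)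
    (hπ : ∀ u v, u ∈ W → v ∈ W → π u = π v → u = v ∨ r u v) :
    ∀ (L : List β) (a : β), SufP (quotRel π r) (π '' Y) a L → ∀ u ∈ W, π u = a →
      ∃ m, SufP r Y u m ∧ ∀ v ∈ m, π v ∈ a :: L ∧ v ∈ W := by
  intro L
  induction L with
  | nil =>
    intro a h u hu hua
    obtain ⟨y, hy, hya⟩ := SufP_nil.1 h
    rcases hπ u y hu (hYW hy) (hua.trans hya.symm) with rfl | h
    · exact ⟨[], SufP_nil.2 hy, by simp⟩
    · refine ⟨[y], SufP_cons.2 ⟨h, SufP_nil.2 hy⟩, ?_⟩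
      simp [hya, hYW hy]
  | cons b L ih =>
    intro a h u hu hua
    obtain ⟨⟨u₁, v₁, hu₁, hv₁, huv⟩, hs⟩ := SufP_cons.1 h
    obtain ⟨m, hm1, hm2⟩ := ih b hs v₁ (hr _ _ huv).2 hv₁
    have hm3 : ∀ v ∈ v₁ :: m, π v ∈ a :: b :: L ∧ v ∈ W := by
      intro v hv
      rcases List.mem_cons.1 hv with rfl | hv
      · exact ⟨by simp [hv₁], (hr _ _ huv).2⟩
      · exact ⟨List.mem_cons_of_mem _ (hm2 v hv).1, (hm2 v hv).2⟩
    rcases hπ u u₁ hu (hr _ _ huv).1 (hua.trans hu₁.symm) with rfl | h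
    · exact ⟨v₁ :: m, SufP_cons.2 ⟨huv, hm1⟩, hm3⟩
    · refine ⟨u₁ :: v₁ :: m, SufP_cons.2 ⟨h, SufP_cons.2 ⟨huv, hm1⟩⟩, ?_⟩
      intro v hv
      rcases List.mem_cons.1 hv with rfl | hv
      · exact ⟨by simp [hu₁], (hr _ _ huv).1⟩
      · exact hm3 v hv

theorem lift_LP {α β : Type*} {π : α → β} {r : α → α → Prop} {W X Y : Set α}
    (hr : ∀ u v, r u v → u ∈ W ∧ v ∈ W) (hXW : X ⊆ W) (hYW : Y ⊆ W)
    (hπ : ∀ u v, u ∈ W → v ∈ W → π u = π v → u = v ∨ r u v)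
    (L : List β) (h : LP (quotRel π r) (π '' X) (π '' Y) L) :
    ∃ l, LP r X Y l ∧ ∀ v ∈ l, π v ∈ L ∧ v ∈ W := by
  obtain ⟨a, L, rfl⟩ := List.exists_cons_of_ne_nil (LP_ne_nil h)
  obtain ⟨hp, hs⟩ := LP_split.1 (show LP _ _ _ ([] ++ a :: L) from h)
  obtain ⟨x, hx, hxa⟩ := PreP_nil.1 hp
  obtain ⟨m, hm1, hm2⟩ := lift_suf hr hYW hπ L a hs x (hXW hx) hxa
  refine ⟨[] ++ x :: m, LP_split.2 ⟨PreP_nil.2 hx, hm1⟩, ?_⟩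
  intro v hv
  rcases List.mem_cons.1 hv with rfl | hv
  · exact ⟨by simp [hxa], hXW hx⟩
  · exact hm2 v hv

theorem map_LP {α β : Type*} (π : α → β) {r : α → α → Prop} {X Y : Set α} {l : List α}
    (h : LP r X Y l) : LP (quotRel π r) (π '' X) (π '' Y) (l.map π) := by
  obtain ⟨h1, ⟨x, h2, h3⟩, ⟨y, h4, h5⟩⟩ := h
  refine ⟨?_, ⟨π x, ?_, ⟨x, h3, rfl⟩⟩, ⟨π y, ?_, ⟨y, h5, rfl⟩⟩⟩
  · rw [List.isChain_map]
    exact h1.imp (fun a b hab => ⟨a, b, rfl, rfl, hab⟩)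
  · simp only [Option.mem_def] at h2 ⊢
    simp [h2]
  · simp only [Option.mem_def] at h4 ⊢
    simp [List.getLast?_map, h4]

/-- The halving step: eliminate one colour of edges between the paths. -/
theorem halving {α : Type*} (G : SimpleGraph α) (X Y W₀ : Set α) (c : Sym2 α → ℕ) (i N : ℕ)
    (hc : ∀ a b a' b', a ∈ W₀ → b ∈ W₀ → a' ∈ W₀ → b' ∈ W₀ → G.Adj a b → G.Adj a' b' →
      c s(a, b) = c s(a', b') → s(a, b) ≠ s(a', b') → a ≠ a' ∧ ¬ G.Adj a a')
    (P₀ : Fin (2 * N) → List α) (hP₀ : ∀ j, LP G.Adj X Y (P₀ j))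
    (hW₀ : ∀ j, ∀ v ∈ P₀ j, v ∈ W₀)
    (hd₀ : ∀ j j' v, v ∈ P₀ j → v ∈ P₀ j' → j = j')
    (hcol₀ : ∀ j j' a b, a ∈ P₀ j → b ∈ P₀ j' → j ≠ j' → G.Adj a b → i ≤ c s(a, b)) :
    ∃ Q : Fin N → List α, (∀ j, LP G.Adj X Y (Q j)) ∧ (∀ j, ∀ v ∈ Q j, v ∈ W₀) ∧
      (∀ j j' v, v ∈ Q j → v ∈ Q j' → j = j') ∧
      (∀ j j' a b, a ∈ Q j → b ∈ Q j' → j ≠ j' → G.Adj a b → i + 1 ≤ c s(a, b)) := by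
  classical
  have hshrink : ∀ j, ∃ l', MinLP G.Adj X Y l' ∧ ∀ v ∈ l', v ∈ P₀ j :=
    fun j => exists_minLP _ (P₀ j) le_rfl (hP₀ j)
  choose P hP hPs using hshrink
  have hd : ∀ j j' v, v ∈ P j → v ∈ P j' → j = j' :=
    fun j j' v h h' => hd₀ j j' v (hPs _ _ h) (hPs _ _ h')
  have hcol : ∀ j j' a b, a ∈ P j → b ∈ P j' → j ≠ j' → G.Adj a b → i ≤ c s(a, b) :=
    fun j j' a b h h' => hcol₀ j j' a b (hPs _ _ h) (hPs _ _ h')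
  let W : Set α := {v | ∃ j, v ∈ P j}
  have hWW : ∀ v ∈ W, v ∈ W₀ := fun v ⟨j, hj⟩ => hW₀ j v (hPs j v hj)
  have hWfin : W.Finite := by
    have : W = ⋃ j, {v | v ∈ P j} := by ext v; simp [W]
    rw [this]
    exact Set.finite_iUnion (fun j => (P j).finite_toSet)
  let M : α → α → Prop := fun a b => a ∈ W ∧ b ∈ W ∧ G.Adj a b ∧ c s(a, b) = i
  have Msym : ∀ a b, M a b → M b a := fun a b ⟨h1, h2, h3, h4⟩ =>
    ⟨h2, h1, h3.symm, by rw [Sym2.eq_swap]; exact h4⟩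
  have Mmatch : ∀ a b b', M a b → M a b' → b = b' := by
    rintro a b b' ⟨h1, h2, h3, h4⟩ ⟨h1', h2', h3', h4'⟩
    by_contra hne
    refine (hc a b a b' (hWW _ h1) (hWW _ h2) (hWW _ h1) (hWW _ h2') h3 h3'
      (h4.trans h4'.symm) ?_).1 rfl
    intro h
    exact hne (Sym2.congr_right.1 h)
  have Mind : ∀ a b a' b', M a a' → M b b' → G.Adj a b → M a b := by
    intro a b a' b' h h' hab
    by_contra hn
    obtain ⟨h1, h2, h3, h4⟩ := id h
    obtain ⟨h1', h2', h3', h4'⟩ := id h'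
    refine (hc a a' b b' (hWW _ h1) (hWW _ h2) (hWW _ h1') (hWW _ h2') h3 h3'
      (h4.trans h4'.symm) ?_).2 hab
    intro he
    rcases Sym2.eq_iff.1 he with ⟨h5, _⟩ | ⟨_, h5⟩
    · exact hab.ne h5
    · rw [h5] at h; exact hn h
  let r : α → α → Prop := fun a b => G.Adj a b ∧ ((∃ j, a ∈ P j ∧ b ∈ P j) ∨ M a b)
  have hrsym : ∀ a b, r a b → r b a := by
    rintro a b ⟨h, ⟨j, h1, h2⟩ | h1⟩
    · exact ⟨h.symm, Or.inl ⟨j, h2, h1⟩⟩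
    · exact ⟨h.symm, Or.inr (Msym _ _ h1)⟩
  have hrirr : ∀ a, ¬ r a a := fun a h => G.loopless.irrefl a h.1
  have hrW : ∀ a b, r a b → a ∈ W ∧ b ∈ W := by
    rintro a b ⟨h, ⟨j, h1, h2⟩ | h1⟩
    · exact ⟨⟨j, h1⟩, ⟨j, h2⟩⟩
    · exact ⟨h1.1, h1.2.1⟩
  have hPr : ∀ j, LP r (X ∩ W) (Y ∩ W) (P j) := by
    intro j
    obtain ⟨ch, ⟨x, hx, hx'⟩, ⟨y, hy, hy'⟩⟩ := (hP j).1
    refine ⟨?_, ⟨x, hx, hx', j, List.mem_of_mem_head? hx⟩,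
      ⟨y, hy, hy', j, List.mem_of_mem_getLast? hy⟩⟩
    rw [List.isChain_iff_forall_rel_of_append_cons_cons] at ch ⊢
    intro a b l₁ l₂ he
    exact ⟨ch he, Or.inl ⟨j, by simp [he], by simp [he]⟩⟩
  let π : α → Set α := fun v => {w | w = v ∨ M v w}
  have hself : ∀ v, v ∈ π v := fun v => Or.inl rfl
  have hπ : ∀ u v, π u = π v → u = v ∨ M u v := by
    intro u v h
    have : v ∈ π u := h ▸ hself v
    rcases this with h | h
    · exact Or.inl h.symm
    · exact Or.inr h
  have hπM : ∀ u v, M u v → π u = π v := by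
    intro u v h
    ext w
    constructor
    · rintro (rfl | h')
      · exact Or.inr (Msym _ _ h)
      · exact Or.inl (Mmatch u w v h' h)
    · rintro (rfl | h')
      · exact Or.inr h
      · exact Or.inl (Mmatch v w u h' (Msym _ _ h))
  have hfin : {p : Set α × Set α | quotRel π r p.1 p.2}.Finite := by
    have : {p : Set α × Set α | quotRel π r p.1 p.2} ⊆
        (fun p : α × α => (π p.1, π p.2)) '' (W ×ˢ W) := by
      rintro ⟨a, b⟩ ⟨u, v, rfl, rfl, h⟩
      exact ⟨(u, v), ⟨(hrW _ _ h).1, (hrW _ _ h).2⟩, rfl⟩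
    exact ((hWfin.prod hWfin).image _).subset this
  obtain ⟨L, hL1, hL2⟩ := menger_fin_s3 _ (quotRel π r) (π '' (X ∩ W)) (π '' (Y ∩ W)) hfin rfl N (by
    intro S hS
    have hh : ∀ j, ∃ v, v ∈ P j ∧ π v ∈ S := by
      intro j
      obtain ⟨z, hz1, hz2⟩ := hS _ (map_LP π (hPr j))
      obtain ⟨v, hv, rfl⟩ := List.mem_map.1 hz2
      exact ⟨v, hv, hz1⟩
    choose v hv1 hv2 using hh
    have hvinj : Function.Injective v := fun j j' h => hd j j' (v j) (hv1 j) (h ▸ hv1 j')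
    have := Finset.card_le_mul_card_image_of_maps_to (s := Finset.univ) (t := S)
      (f := fun j => π (v j)) (fun j _ => hv2 j) 2 (by
        intro s hs
        by_contra hgt
        push Not at hgt
        obtain ⟨j₁, j₂, j₃, h1, h2, h3, h12, h13, h23⟩ := Finset.two_lt_card_iff.1 hgt
        simp only [Finset.mem_filter, Finset.mem_univ, true_and] at h1 h2 h3
        rcases hπ _ _ (h1.trans h2.symm) with h | h
        · exact h12 (hvinj h)
        rcases hπ _ _ (h1.trans h3.symm) with h' | h'
        · exact h13 (hvinj h')
        exact h23 (hvinj (Mmatch _ _ _ h h')))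
    simp at this
    omega)
  have hlift : ∀ t, ∃ l, MinLP r (X ∩ W) (Y ∩ W) l ∧ ∀ v ∈ l, π v ∈ L t ∧ v ∈ W := by
    intro t
    obtain ⟨l, hl1, hl2⟩ := lift_LP hrW Set.inter_subset_right Set.inter_subset_right
      (fun u v hu hv h => by
        rcases hπ u v h with h | h
        · exact Or.inl h
        · exact Or.inr ⟨h.2.2.1, Or.inr h⟩) (L t) (hL1 t)
    obtain ⟨l', h1, h2⟩ := exists_minLP _ l le_rfl hl1
    exact ⟨l', h1, fun v hv => hl2 v (h2 v hv)⟩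
  choose Q hQ hQL using hlift
  have hQd : ∀ t t' v, v ∈ Q t → v ∈ Q t' → t = t' := fun t t' v h h' =>
    hL2 t t' (π v) (hQL t v h).1 (hQL t' v h').1
  have deg : ∀ t t' j a b, t ≠ t' → a ∈ Q t → b ∈ Q t' → a ∈ P j → b ∈ P j → G.Adj a b →
      (∀ w, ¬ M b w) → False := by
    intro t t' j a b htt ha hb haj hbj hab hbM
    have d1 := minLP_degree (fun _ _ h => h.symm) (fun a => G.loopless.irrefl a) (hP j) b hbj
    have d2 := minLP_degree hrsym hrirr (hQ t') b hb
    have hbW : b ∈ W := ⟨j, hbj⟩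
    have e1 : (b ∈ X ∩ W) = (b ∈ X) := by simp [hbW]
    have e2 : (b ∈ Y ∩ W) = (b ∈ Y) := by simp [hbW]
    simp only [e1, e2] at d2
    have hlt : {w | w ∈ Q t' ∧ r b w}.ncard < {w | w ∈ P j ∧ G.Adj b w}.ncard := by
      apply Set.ncard_lt_ncard
      · refine ⟨?_, ?_⟩
        · rintro w ⟨hw, h, ⟨j', h1, h2⟩ | h1⟩
          · rw [hd j' j b h1 hbj] at h2
            exact ⟨h2, h⟩
          · exact absurd h1 (hbM w)
        · intro hsub
          have : a ∈ {w | w ∈ Q t' ∧ r b w} := hsub ⟨haj, hab.symm⟩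
          exact htt (hQd t t' a ha this.1)
      · exact (P j).finite_toSet.subset (fun w hw => hw.1)
    omega
  refine ⟨Q, fun t => LP_mono (fun a b h => h.1) Set.inter_subset_left Set.inter_subset_left
    (hQ t).1, fun t v hv => hWW v (hQL t v hv).2, hQd, ?_⟩
  intro t t' a b ha hb htt hab
  obtain ⟨j, hj⟩ := (hQL t a ha).2
  obtain ⟨j', hj'⟩ := (hQL t' b hb).2
  have hnM : ¬ M a b := by
    intro h
    have h1 := (hQL t a ha).1
    rw [hπM a b h] at h1
    exact htt (hL2 t t' _ h1 (hQL t' b hb).1)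
  by_cases hjj : j = j'
  · subst hjj
    exfalso
    by_cases hbM : ∃ w, M b w
    · by_cases haM : ∃ w, M a w
      · obtain ⟨w, hw⟩ := hbM
        obtain ⟨w', hw'⟩ := haM
        exact hnM (Mind a b w' w hw' hw hab)
      · push Not at haM
        exact deg t' t j b a htt.symm hb ha hj' hj hab.symm haM
    · push Not at hbM
      exact deg t t' j a b htt ha hb hj hj' hab hbM
  · have h1 := hcol j j' a b hj hj' hjj hab
    have h2 : c s(a, b) ≠ i := fun h => hnM ⟨⟨j, hj⟩, ⟨j', hj'⟩, hab, h⟩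
    omega

/-- Greedy colouring of a finite conflict relation. -/
theorem greedy {β : Type*} [DecidableEq β] (conf : β → β → Prop)
    (hsym : ∀ e f, conf e f → conf f e) (n : ℕ) (E : Finset β) :
    (∀ e ∈ E, {f | f ∈ E ∧ f ≠ e ∧ conf e f}.ncard < n) →
    ∃ c : β → ℕ, (∀ e ∈ E, c e < n) ∧ ∀ e ∈ E, ∀ f ∈ E, e ≠ f → conf e f → c e ≠ c f := by
  classical
  induction E using Finset.induction_on with
  | empty => intro _; exact ⟨fun _ => 0, by simp, by simp⟩
  | insert x E hx ih =>
    intro h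
    obtain ⟨c, hc1, hc2⟩ := ih (by
      intro e he
      refine lt_of_le_of_lt (Set.ncard_le_ncard ?_ ?_) (h e (Finset.mem_insert_of_mem he))
      · rintro f ⟨h1, h2⟩
        exact ⟨Finset.mem_insert_of_mem h1, h2⟩
      · exact (insert x E).finite_toSet.subset (fun f hf => hf.1))
    have hfin : {f | f ∈ insert x E ∧ f ≠ x ∧ conf x f}.Finite :=
      (insert x E).finite_toSet.subset (fun f hf => hf.1)
    have hcard := h x (Finset.mem_insert_self _ _)
    rw [Set.ncard_eq_toFinset_card _ hfin] at hcard
    have hlt : (hfin.toFinset.image c).card < (Finset.range n).card := by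
      rw [Finset.card_range]
      exact Finset.card_image_le.trans_lt hcard
    obtain ⟨k, hk1, hk2⟩ := Finset.exists_mem_notMem_of_card_lt_card hlt
    have hkc : ∀ f ∈ E, conf x f → c f ≠ k := by
      rintro f hf hcf rfl
      apply hk2
      refine Finset.mem_image_of_mem _ ?_
      simp only [Set.Finite.mem_toFinset, Set.mem_ofPred_eq]
      exact ⟨Finset.mem_insert_of_mem hf, fun h => hx (h ▸ hf), hcf⟩
    have hne : ∀ f ∈ E, f ≠ x := fun f hf h => hx (h ▸ hf)
    refine ⟨Function.update c x k, ?_, ?_⟩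
    · intro e he
      rcases Finset.mem_insert.1 he with rfl | he
      · simpa using hk1
      · rw [Function.update_of_ne (hne e he)]; exact hc1 e he
    · intro e he f hf hef hcf
      rcases Finset.mem_insert.1 he with rfl | he2 <;>
        rcases Finset.mem_insert.1 hf with rfl | hf2
      · exact absurd rfl hef
      · rw [Function.update_self, Function.update_of_ne (hne f hf2)]
        exact (hkc f hf2 hcf).symm
      · rw [Function.update_self, Function.update_of_ne (hne e he2)]
        exact hkc e he2 (hsym _ _ hcf)
      · rw [Function.update_of_ne (hne f hf2), Function.update_of_ne (hne e he2)]
        exact hc2 e he2 f hf2 hef hcf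

/-- A strong edge colouring of the edges inside a finite vertex set. -/
theorem strong_colouring {α : Type*} (G : SimpleGraph α) (Δ : ℕ)
    (hfin : ∀ v, (G.neighborSet v).Finite) (hdeg : ∀ v, (G.neighborSet v).ncard ≤ Δ)
    (W : Finset α) :
    ∃ c : Sym2 α → ℕ,
      (∀ a b, a ∈ W → b ∈ W → G.Adj a b → c s(a, b) < 2 * Δ * (Δ - 1) + 1) ∧
      (∀ a b a' b', a ∈ W → b ∈ W → a' ∈ W → b' ∈ W → G.Adj a b → G.Adj a' b' →
      c s(a, b) = c s(a', b') → s(a, b) ≠ s(a', b') → a ≠ a' ∧ ¬ G.Adj a a') := by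
  classical
  let N : α → Finset α := fun v => (hfin v).toFinset
  have hN : ∀ v w, w ∈ N v ↔ G.Adj v w := by intro v w; simp [N]
  have hNc : ∀ v, (N v).card ≤ Δ := by
    intro v
    have := hdeg v
    rwa [Set.ncard_eq_toFinset_card _ (hfin v)] at this
  obtain ⟨c, hc1, hc2⟩ := greedy (β := Sym2 α) (fun e f => ∃ a ∈ e, ∃ b ∈ f, a = b ∨ G.Adj a b)
    (by
      rintro e f ⟨a, ha, b, hb, h⟩
      exact ⟨b, hb, a, ha, h.imp Eq.symm (fun h => h.symm)⟩)
    (2 * Δ * (Δ - 1) + 1) (W.sym2.filter (· ∈ G.edgeSet)) (by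
      intro e he
      induction e using Sym2.ind with
      | _ u v =>
      have huv : G.Adj u v := by simpa using (Finset.mem_filter.1 he).2
      let T : Finset α := (N u).erase v ∪ (N v).erase u
      have hT : T.card ≤ 2 * (Δ - 1) := by
        refine (Finset.card_union_le _ _).trans ?_
        rw [Finset.card_erase_of_mem ((hN _ _).2 huv), Finset.card_erase_of_mem ((hN _ _).2 huv.symm)]
        have h1 := hNc u
        have h2 := hNc v
        omega
      have hmemT : ∀ w, w ∈ T ↔ (w ≠ v ∧ G.Adj u w) ∨ (w ≠ u ∧ G.Adj v w) := by
        intro w; simp [T, hN]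
      let F : Finset (Sym2 α) := T.biUnion (fun w => (N w).image (fun z => s(w, z)))
      have hF : F.card ≤ 2 * Δ * (Δ - 1) := by
        have := Finset.card_biUnion_le_card_mul T (fun w => (N w).image (fun z => s(w, z))) Δ
          (fun w _ => Finset.card_image_le.trans (hNc w))
        calc F.card ≤ T.card * Δ := this
          _ ≤ 2 * (Δ - 1) * Δ := Nat.mul_le_mul_right _ hT
          _ = 2 * Δ * (Δ - 1) := by ring
      have hFmem : ∀ w z, w ∈ T → G.Adj w z → s(w, z) ∈ F := by
        intro w z hw hz
        exact Finset.mem_biUnion.2 ⟨w, hw, Finset.mem_image.2 ⟨z, (hN _ _).2 hz, rfl⟩⟩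
      have hsub : {f | f ∈ W.sym2.filter (· ∈ G.edgeSet) ∧ f ≠ s(u, v) ∧
          ∃ a ∈ s(u, v), ∃ b ∈ f, a = b ∨ G.Adj a b} ⊆ (F : Set (Sym2 α)) := by
        rintro f ⟨hf, hne, a, ha, b, hb, hab⟩
        obtain ⟨q, rfl⟩ := Sym2.mem_iff_exists.1 hb
        have hbq : G.Adj b q := by simpa using (Finset.mem_filter.1 hf).2
        have A1 : ∀ p q, G.Adj p q → s(p, q) ≠ s(u, v) → (p = u ∨ p = v) → s(p, q) ∈ F := by
          rintro p q hpq hne (rfl | rfl)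
          · rw [Sym2.eq_swap]
            apply hFmem _ _ ((hmemT _).2 (Or.inl ⟨?_, hpq⟩)) hpq.symm
            rintro rfl; exact hne rfl
          · rw [Sym2.eq_swap]
            apply hFmem _ _ ((hmemT _).2 (Or.inr ⟨?_, hpq⟩)) hpq.symm
            rintro rfl; exact hne Sym2.eq_swap
        by_cases hbuv : b = u ∨ b = v
        · exact A1 b q hbq hne hbuv
        · push Not at hbuv
          rcases Sym2.mem_iff.1 ha with rfl | rfl
          · rcases hab with rfl | hab
            · exact absurd rfl hbuv.1
            · exact hFmem _ _ ((hmemT _).2 (Or.inl ⟨hbuv.2, hab⟩)) hbq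
          · rcases hab with rfl | hab
            · exact absurd rfl hbuv.2
            · exact hFmem _ _ ((hmemT _).2 (Or.inr ⟨hbuv.1, hab⟩)) hbq
      have := Set.ncard_le_ncard hsub F.finite_toSet
      rw [Set.ncard_coe_finset] at this
      omega)
  have hmem : ∀ a b, a ∈ W → b ∈ W → G.Adj a b → s(a, b) ∈ W.sym2.filter (· ∈ G.edgeSet) := by
    intro a b ha hb hab
    simp [ha, hb, hab]
  refine ⟨c, fun a b ha hb hab => hc1 _ (hmem a b ha hb hab), ?_⟩
  intro a b a' b' ha hb ha' hb' hab hab' hcc hne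
  by_contra hcon
  refine hc2 _ (hmem a b ha hb hab) _ (hmem a' b' ha' hb' hab') hne
    ⟨a, by simp, a', by simp, ?_⟩ hcc
  tauto

theorem iterate_halving_s3 {α : Type*} (G : SimpleGraph α) (X Y W₀ : Set α) (c : Sym2 α → ℕ) (k : ℕ)
    (hc : ∀ a b a' b', a ∈ W₀ → b ∈ W₀ → a' ∈ W₀ → b' ∈ W₀ → G.Adj a b → G.Adj a' b' →
      c s(a, b) = c s(a', b') → s(a, b) ≠ s(a', b') → a ≠ a' ∧ ¬ G.Adj a a') (n : ℕ) :
    ∀ (i : ℕ) (P : Fin (2 ^ n * k) → List α), (∀ j, LP G.Adj X Y (P j)) →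
    (∀ j, ∀ v ∈ P j, v ∈ W₀) → (∀ j j' v, v ∈ P j → v ∈ P j' → j = j') →
    (∀ j j' a b, a ∈ P j → b ∈ P j' → j ≠ j' → G.Adj a b → i ≤ c s(a, b)) →
    ∃ Q : Fin k → List α, (∀ j, LP G.Adj X Y (Q j)) ∧ (∀ j, ∀ v ∈ Q j, v ∈ W₀) ∧
      (∀ j j' v, v ∈ Q j → v ∈ Q j' → j = j') ∧
      (∀ j j' a b, a ∈ Q j → b ∈ Q j' → j ≠ j' → G.Adj a b → i + n ≤ c s(a, b)) := by
  induction n with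
  | zero =>
    rw [pow_zero, one_mul]
    intro i P h1 h2 h3 h4
    exact ⟨P, h1, h2, h3, h4⟩
  | succ n ih =>
    have e : 2 ^ (n + 1) * k = 2 * (2 ^ n * k) := by ring
    rw [e]
    intro i P h1 h2 h3 h4
    obtain ⟨Q, q1, q2, q3, q4⟩ := halving G X Y W₀ c i (2 ^ n * k) hc P h1 h2 h3 h4
    obtain ⟨R, r1, r2, r3, r4⟩ := ih (i + 1) Q q1 q2 q3 q4
    refine ⟨R, r1, r2, r3, fun j j' a b ha hb hj hab => ?_⟩
    have := r4 j j' a b ha hb hj hab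
    omega

theorem statement_3 (Δ k : ℕ) (G : SimpleGraph V)
    (hfin : ∀ v, (G.neighborSet v).Finite)
    (hdeg : ∀ v, (G.neighborSet v).ncard ≤ Δ)
    (X Y : Set V) :
    (∃ P : Fin k → PathPkg G,
        (∀ i, IsXYPath G X Y (P i)) ∧
        Pairwise fun i j => PkgNonAdj G (P i) (P j)) ∨
    (∃ Z : Set V, Z.Finite ∧ Z.ncard < 2 ^ (2 * Δ * (Δ - 1) + 1) * k ∧
        XYSeparates G X Y Z) := by
  classical
  rcases menger_inf G.Adj X Y (2 ^ (2 * Δ * (Δ - 1) + 1) * k) with ⟨P, hP1, hP2⟩ | ⟨Z, hZ1, hZ2, hZ3⟩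
  · left
    let W : Finset V := Finset.univ.biUnion (fun j => (P j).toFinset)
    obtain ⟨c, hc1, hc2⟩ := strong_colouring G Δ hfin hdeg W
    obtain ⟨Q, q1, q2, q3, q4⟩ := iterate_halving_s3 G X Y (W : Set V) c k hc2 _ 0 P hP1
      (by
        intro j v hv
        simp only [W, Finset.coe_biUnion, Set.mem_iUnion]
        exact ⟨j, by simp, by simpa using hv⟩) hP2 (fun _ _ _ _ _ _ _ _ => Nat.zero_le _)
    have hpath : ∀ j, ∃ p : PathPkg G, IsXYPath G X Y p ∧ ∀ v ∈ pkgSupport p, v ∈ Q j := by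
      intro j
      obtain ⟨ch, ⟨x, hx, hx'⟩, ⟨y, hy, hy'⟩⟩ := q1 j
      have hne := LP_ne_nil (q1 j)
      refine ⟨⟨_, _, (Walk.ofSupport (Q j) hne ch).bypass⟩, ⟨Walk.bypass_isPath _, ?_, ?_⟩, ?_⟩
      · have : (Q j).head hne = x := by
          rw [List.head?_eq_some_head hne] at hx
          simpa using hx
        simpa [this] using hx'
      · have : (Q j).getLast hne = y := by
          rw [List.getLast?_eq_some_getLast hne] at hy
          simpa using hy
        simpa [this] using hy'
      · intro v hv
        have := Walk.support_bypass_subset_support _ hv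
        rwa [Walk.support_ofSupport] at this
    choose p hp1 hp2 using hpath
    refine ⟨p, hp1, ?_⟩
    intro i j hij a ha b hb
    have ha' := hp2 i a ha
    have hb' := hp2 j b hb
    refine ⟨?_, ?_⟩
    · rintro rfl
      exact hij (q3 i j a ha' hb')
    · intro hab
      have h1 := q4 i j a b ha' hb' hij hab
      have h2 := hc1 a b (q2 i a ha') (q2 j b hb') hab
      omega
  · right
    refine ⟨Z, hZ1, hZ2, ?_⟩
    rintro ⟨x, y, p⟩ ⟨hp, hx, hy⟩
    have e1 : x ∈ p.support.head? := by
      rw [List.head?_eq_some_head p.support_ne_nil]; simp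
    have e2 : y ∈ p.support.getLast? := by
      rw [List.getLast?_eq_some_getLast p.support_ne_nil]; simp
    obtain ⟨z, hz1, hz2⟩ := hZ3 p.support ⟨p.isChain_adj_support, ⟨x, e1, hx⟩, ⟨y, e2, hy⟩⟩
    exact ⟨z, hz1, hz2⟩
end
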